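/- arXiv:1207.3206 — 2 statements merged into one kernel-verified Lean document; each statement's English description precedes it below -/
import Mathlib

section
/- Let n ≥ 1 be an integer and let X be an n-periodic collection of arcs of the ∞-gon. Then X = nc(nc X) if and only if X is a Ptolemy diagram. -/
/-- An arc of the ∞-gon: a pair `(i,j)` of integers with `j - i ≥ 2`. -/
def IsArc (a : ℤ × ℤ) : Prop := 2 ≤ a.2 - a.1

/-- Two arcs `(i,j)` and `(k,l)` cross if `i < k < j < l` or `k < i < l < j`. -/
def Cross (a b : ℤ × ℤ) : Prop :=
  (a.1 < b.1 ∧ b.1 < a.2 ∧ a.2 < b.2) ∨ (b.1 < a.1 ∧ a.1 < b.2 ∧ b.2 < a.2)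

/-- `nc X` is the collection of all arcs crossing no arc of `X`. -/
def nc (X : Set (ℤ × ℤ)) : Set (ℤ × ℤ) :=
  {a | IsArc a ∧ ∀ b ∈ X, ¬ Cross a b}

/-- A collection of arcs is `n`-periodic if it is stable under shifts by multiples of `n`. -/
def Periodic (n : ℤ) (X : Set (ℤ × ℤ)) : Prop :=
  ∀ i j r : ℤ, (i, j) ∈ X → (i + r * n, j + r * n) ∈ X

/-- The Ptolemy condition: whenever `(i,j), (r,s) ∈ X` cross with `i < r`
(so `i < r < j < s`), each of the pairs `(i,r)`, `(i,s)`, `(r,j)`, `(j,s)`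
that is an arc also belongs to `X`. -/
def IsPtolemy (X : Set (ℤ × ℤ)) : Prop :=
  ∀ i j r s : ℤ, (i, j) ∈ X → (r, s) ∈ X → i < r → r < j → j < s →
    (2 ≤ r - i → (i, r) ∈ X) ∧ (2 ≤ s - i → (i, s) ∈ X) ∧
    (2 ≤ j - r → (r, j) ∈ X) ∧ (2 ≤ s - j → (j, s) ∈ X)

/-!
An arc crossing a side of a quadrilateral `i < r < j < s` crosses one of its diagonals, so `nc Y` is
always Ptolemy. Conversely, let `X` be Ptolemy and let `(a, b)` lie in `nc (nc X)` but not in `X`.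
If `a` had a neighbour in `X` nearest to `b` on each side of `b`, in the cyclic order of the ∞-gon,
then joining these two neighbours would give an arc of `nc X` crossing `(a, b)`. So one of the two
does not exist, which forces infinitely many arcs of `X` to end at `a`; symmetrically, infinitely
many arcs of `X` start at `b`. When `X` is periodic, some translate of the fountain at `b` lies to
the left of `a`, and the Ptolemy condition turns `a` into a right fountain as well; likewise `b` is
a left fountain. Then `(w, b)` and `(a, v)` lie in `X` for some `w < a` and `v > b`, and since they
cross, `(a, b)` lies in `X` after all.
-/

theorem Cross.symm {a b : ℤ × ℤ} (h : Cross a b) : Cross b a :=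
  Or.symm h

theorem subset_nc_nc {X : Set (ℤ × ℤ)} (hX : ∀ a ∈ X, IsArc a) : X ⊆ nc (nc X) :=
  fun a ha ↦ ⟨hX a ha, fun _ hb hab ↦ hb.2 a ha hab.symm⟩

theorem cross_diagonal_of_cross_side {i r j s : ℤ} {c : ℤ × ℤ} (hir : i < r) (hrj : r < j)
    (hjs : j < s)
    (hc : Cross (i, r) c ∨ Cross (i, s) c ∨ Cross (r, j) c ∨ Cross (j, s) c) :
    Cross (i, j) c ∨ Cross (r, s) c := by
  simp only [Cross] at hc ⊢
  omega

theorem isPtolemy_nc (Y : Set (ℤ × ℤ)) : IsPtolemy (nc Y) := by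
  intro i j r s hij hrs hir hrj hjs
  have not_cross_side (c) (hc : c ∈ Y) :
      ¬(Cross (i, r) c ∨ Cross (i, s) c ∨ Cross (r, j) c ∨ Cross (j, s) c) := fun h ↦
    (cross_diagonal_of_cross_side hir hrj hjs h).elim (hij.2 c hc) (hrs.2 c hc)
  simp only [not_or] at not_cross_side
  exact ⟨fun h ↦ ⟨h, fun c hc ↦ (not_cross_side c hc).1⟩,
    fun h ↦ ⟨h, fun c hc ↦ (not_cross_side c hc).2.1⟩,
    fun h ↦ ⟨h, fun c hc ↦ (not_cross_side c hc).2.2.1⟩,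
    fun h ↦ ⟨h, fun c hc ↦ (not_cross_side c hc).2.2.2⟩⟩

/-- A left fountain of `X` at `a`: infinitely many arcs of `X` end at `a`, encoded as their left
endpoints being unbounded below. -/
def IsLeftFountain (X : Set (ℤ × ℤ)) (a : ℤ) : Prop :=
  ∀ N, ∃ u < N, (u, a) ∈ X

/-- A right fountain of `X` at `b`: infinitely many arcs of `X` start at `b`, encoded as their right
endpoints being unbounded above. -/
def IsRightFountain (X : Set (ℤ × ℤ)) (b : ℤ) : Prop :=
  ∀ N, ∃ v > N, (b, v) ∈ X

theorem mem_nc_nc_of_fountains {X : Set (ℤ × ℤ)} {a b : ℤ} (hab : IsArc (a, b))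
    (ha : IsLeftFountain X a) (hb : IsRightFountain X b) : (a, b) ∈ nc (nc X) := by
  refine ⟨hab, ?_⟩
  rintro ⟨x, y⟩ hxy (⟨-, hxb, hby⟩ | ⟨hxa, hay, -⟩)
  · obtain ⟨v, hyv, hv⟩ := hb y
    exact hxy.2 (b, v) hv (.inl ⟨hxb, hby, hyv⟩)
  · obtain ⟨u, hux, hu⟩ := ha x
    exact hxy.2 (u, a) hu (.inr ⟨hux, hxa, hay⟩)

/-- The arcs of `X` together with the sides `(i, i + 1)` of the ∞-gon. A side crosses nothing, and
including the sides removes the length conditions from the Ptolemy condition. -/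
def edges (X : Set (ℤ × ℤ)) : Set (ℤ × ℤ) :=
  {a | a.2 = a.1 + 1 ∨ a ∈ X}

theorem subset_edges (X : Set (ℤ × ℤ)) : X ⊆ edges X :=
  fun _ ↦ Or.inr

theorem side_mem_edges (X : Set (ℤ × ℤ)) (i : ℤ) : (i, i + 1) ∈ edges X :=
  .inl rfl

theorem mem_edges_iff_of_two_le {X : Set (ℤ × ℤ)} {i j : ℤ} (hij : 2 ≤ j - i) :
    (i, j) ∈ edges X ↔ (i, j) ∈ X :=
  or_iff_right (show j ≠ i + 1 by omega)

theorem exists_last_edge_le (X : Set (ℤ × ℤ)) {a b : ℤ} (hab : a < b) :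
    ∃ t, a < t ∧ t ≤ b ∧ (a, t) ∈ edges X ∧ ∀ q, t < q → q ≤ b → (a, q) ∉ edges X := by
  obtain ⟨t, ⟨hat, htb, ht⟩, hmax⟩ := Int.exists_greatest_of_bdd
    (P := fun t ↦ a < t ∧ t ≤ b ∧ (a, t) ∈ edges X)
    ⟨b, fun _ hz ↦ hz.2.1⟩ ⟨a + 1, by omega, by omega, side_mem_edges X a⟩
  exact ⟨t, hat, htb, ht, fun q htq hqb hq ↦ (hmax q ⟨by omega, hqb, hq⟩).not_gt htq⟩

theorem exists_first_edge_gt {X : Set (ℤ × ℤ)} {a b v : ℤ} (hbv : b < v) (hv : (a, v) ∈ edges X) :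
    ∃ u, b < u ∧ (a, u) ∈ edges X ∧ ∀ q, b < q → q < u → (a, q) ∉ edges X := by
  obtain ⟨u, ⟨hbu, hu⟩, hmin⟩ := Int.exists_least_of_bdd
    (P := fun u ↦ b < u ∧ (a, u) ∈ edges X) ⟨b, fun _ hz ↦ hz.1.le⟩ ⟨v, hbv, hv⟩
  exact ⟨u, hbu, hu, fun q hbq hqu hq ↦ (hmin q ⟨hbq, hq⟩).not_gt hqu⟩

theorem exists_leftmost_edge_of_not_isLeftFountain {X : Set (ℤ × ℤ)} {a : ℤ}
    (ha : ¬IsLeftFountain X a) :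
    ∃ u < a, (u, a) ∈ edges X ∧ ∀ p < u, (p, a) ∉ edges X := by
  simp only [IsLeftFountain, not_forall, not_exists, not_and] at ha
  obtain ⟨N, hN⟩ := ha
  have min_le_of_mem_edges (z) (hz : (z, a) ∈ edges X) : min N (a - 1) ≤ z := by
    obtain hside | hzX := hz
    · exact min_le_of_right_le (sub_le_iff_le_add.2 hside.le)
    · exact min_le_of_left_le (not_lt.1 fun hzN ↦ hN z hzN hzX)
  obtain ⟨u, ⟨hua, hu⟩, hmin⟩ := Int.exists_least_of_bdd
    (P := fun u ↦ u < a ∧ (u, a) ∈ edges X) ⟨_, fun z hz ↦ min_le_of_mem_edges z hz.2⟩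
    ⟨a - 1, by omega, by simpa using side_mem_edges X (a - 1)⟩
  exact ⟨u, hua, hu, fun p hpu hp ↦ (hmin p ⟨by omega, hp⟩).not_gt hpu⟩

namespace IsPtolemy

variable {X : Set (ℤ × ℤ)} {a b : ℤ}

theorem quadrilateral_mem_edges (hP : IsPtolemy X) {i r j s : ℤ} (hij : (i, j) ∈ edges X)
    (hrs : (r, s) ∈ edges X) (hir : i < r) (hrj : r < j) (hjs : j < s) :
    (i, r) ∈ edges X ∧ (i, s) ∈ edges X ∧ (r, j) ∈ edges X ∧ (j, s) ∈ edges X := by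
  have mem_edges {x y : ℤ} (hxy : x < y) (h : 2 ≤ y - x → (x, y) ∈ X) : (x, y) ∈ edges X :=
    or_iff_not_imp_left.2 fun hside : y ≠ x + 1 ↦ h (by omega)
  rw [mem_edges_iff_of_two_le (by omega)] at hij hrs
  obtain ⟨hir', his', hrj', hjs'⟩ := hP i j r s hij hrs hir hrj hjs
  exact ⟨mem_edges hir hir', mem_edges (by omega) his', mem_edges hrj hrj', mem_edges hjs hjs'⟩

theorem mem_nc_of_consecutive_edges (hP : IsPtolemy X) {t u : ℤ} (hat : a < t) (htu : IsArc (t, u))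
    (ht : (a, t) ∈ edges X) (hu : (a, u) ∈ edges X)
    (hgap : ∀ q, t < q → q < u → (a, q) ∉ edges X) : (t, u) ∈ nc X := by
  refine ⟨htu, ?_⟩
  rintro ⟨p, q⟩ hpq (⟨htp, hpu, huq⟩ | ⟨hpt, htq, hqu⟩)
  all_goals replace hpq := subset_edges X hpq
  · exact hgap p htp hpu (hP.quadrilateral_mem_edges hu hpq (hat.trans htp) hpu huq).1
  · apply hgap q htq hqu
    rcases lt_trichotomy p a with hpa | rfl | hap
    · exact (hP.quadrilateral_mem_edges hpq hu hpa (hat.trans htq) hqu).2.2.1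
    · exact hpq
    · exact (hP.quadrilateral_mem_edges ht hpq hap hpt htq).2.1

theorem mem_nc_of_outermost_edges (hP : IsPtolemy X) {u t : ℤ} (hua : u < a) (hat : a < t)
    (hu : (u, a) ∈ edges X) (ht : (a, t) ∈ edges X)
    (hleft : ∀ p < u, (p, a) ∉ edges X) (hright : ∀ q > t, (a, q) ∉ edges X) :
    (u, t) ∈ nc X := by
  refine ⟨show 2 ≤ t - u by omega, ?_⟩
  rintro ⟨p, q⟩ hpq (⟨hup, hpt, htq⟩ | ⟨hpu, huq, hqt⟩)
  all_goals replace hpq := subset_edges X hpq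
  · apply hright q htq
    rcases lt_trichotomy p a with hpa | rfl | hap
    · exact (hP.quadrilateral_mem_edges hu hpq hup hpa (hat.trans htq)).2.2.2
    · exact hpq
    · exact (hP.quadrilateral_mem_edges ht hpq hap hpt htq).2.1
  · apply hleft p hpu
    rcases lt_trichotomy q a with hqa | rfl | haq
    · exact (hP.quadrilateral_mem_edges hpq hu hpu huq hqa).2.1
    · exact hpq
    · exact (hP.quadrilateral_mem_edges hpq ht (hpu.trans hua) haq hqt).1

theorem mem_edges_of_mem_nc_nc_of_lt (hP : IsPtolemy X) (hab : (a, b) ∈ nc (nc X)) {v : ℤ}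
    (hbv : b < v) (hv : (a, v) ∈ edges X) : (a, b) ∈ edges X := by
  by_contra hnot
  have hlen : 2 ≤ b - a := hab.1
  obtain ⟨t, hat, htb, ht, hlast⟩ := exists_last_edge_le X (show a < b by omega)
  replace htb : t < b := htb.lt_of_ne (by rintro rfl; exact hnot ht)
  obtain ⟨u, hbu, hu, hfirst⟩ := exists_first_edge_gt hbv hv
  have htu : (t, u) ∈ nc X :=
    hP.mem_nc_of_consecutive_edges hat (show 2 ≤ u - t by omega) ht hu fun q htq hqu ↦
      (le_or_gt q b).elim (hlast q htq) (hfirst q · hqu)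
  exact hab.2 (t, u) htu (.inl ⟨hat, htb, hbu⟩)

theorem isLeftFountain_of_mem_nc_nc (hP : IsPtolemy X) (hab : (a, b) ∈ nc (nc X))
    (hnot : (a, b) ∉ X) : IsLeftFountain X a := by
  by_contra ha
  have hlen : 2 ≤ b - a := hab.1
  rw [← mem_edges_iff_of_two_le hlen] at hnot
  obtain ⟨t, hat, htb, ht, hlast⟩ := exists_last_edge_le X (show a < b by omega)
  replace htb : t < b := htb.lt_of_ne (by rintro rfl; exact hnot ht)
  obtain ⟨u, hua, hu, hleft⟩ := exists_leftmost_edge_of_not_isLeftFountain ha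
  have hut : (u, t) ∈ nc X :=
    hP.mem_nc_of_outermost_edges hua hat hu ht hleft fun q htq hq ↦
      (le_or_gt q b).elim (hlast q htq · hq)
        fun hbq ↦ hnot (hP.mem_edges_of_mem_nc_nc_of_lt hab hbq hq)
  exact hab.2 (u, t) hut (.inr ⟨hua, hat, htb⟩)

end IsPtolemy

/-- The mirror image of `X` under `i ↦ -i`, used to deduce statements about right fountains from
those about left fountains. The endpoints are swapped to keep them in increasing order. -/
def reflect (X : Set (ℤ × ℤ)) : Set (ℤ × ℤ) :=
  {a | (-a.2, -a.1) ∈ X}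

theorem neg_mem_reflect {X : Set (ℤ × ℤ)} {i j : ℤ} : (-j, -i) ∈ reflect X ↔ (i, j) ∈ X := by
  simp [reflect]

theorem cross_neg_iff {i j k l : ℤ} : Cross (-j, -i) (-l, -k) ↔ Cross (i, j) (k, l) := by
  simp only [Cross]
  omega

theorem nc_reflect (X : Set (ℤ × ℤ)) : nc (reflect X) = reflect (nc X) := by
  ext ⟨x, y⟩
  have isArc_iff : IsArc (x, y) ↔ IsArc (-y, -x) := by
    simp only [IsArc]
    omega
  refine and_congr isArc_iff ⟨fun h c hc hcross ↦ ?_, fun h c hc hcross ↦ ?_⟩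
  · exact h (-c.2, -c.1) (neg_mem_reflect.2 hc) (by simpa using cross_neg_iff.2 hcross)
  · exact h (-c.2, -c.1) hc (cross_neg_iff.2 hcross)

theorem isPtolemy_reflect {X : Set (ℤ × ℤ)} (hP : IsPtolemy X) : IsPtolemy (reflect X) := by
  intro i j r s hij hrs hir hrj hjs
  obtain ⟨hsj, hsi, hjr, hri⟩ :=
    hP (-s) (-r) (-j) (-i) hrs hij (neg_lt_neg hjs) (neg_lt_neg hrj) (neg_lt_neg hir)
  exact ⟨fun h ↦ hri (by omega), fun h ↦ hsi (by omega), fun h ↦ hjr (by omega),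
    fun h ↦ hsj (by omega)⟩

theorem isRightFountain_of_isLeftFountain_reflect {X : Set (ℤ × ℤ)} {b : ℤ}
    (h : IsLeftFountain (reflect X) (-b)) : IsRightFountain X b := by
  intro N
  obtain ⟨u, huN, hu⟩ := h (-N)
  exact ⟨-u, lt_neg.1 huN, neg_mem_reflect.1 (by simpa only [neg_neg] using hu)⟩

theorem IsPtolemy.isRightFountain_of_mem_nc_nc {X : Set (ℤ × ℤ)} {a b : ℤ} (hP : IsPtolemy X)
    (hab : (a, b) ∈ nc (nc X)) (hnot : (a, b) ∉ X) : IsRightFountain X b := by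
  apply isRightFountain_of_isLeftFountain_reflect
  apply (isPtolemy_reflect hP).isLeftFountain_of_mem_nc_nc (b := -a)
  · rw [nc_reflect, nc_reflect]
    exact neg_mem_reflect.2 hab
  · rwa [neg_mem_reflect]

theorem nc_nc_eq_iff_isPtolemy_general (X : Set (ℤ × ℤ)) (hX : ∀ a ∈ X, IsArc a) :
    X = nc (nc X) ↔ IsPtolemy X ∧
      ∀ a b, IsArc (a, b) → IsLeftFountain X a → IsRightFountain X b → (a, b) ∈ X := by
  constructor
  · intro h
    refine ⟨h ▸ isPtolemy_nc (nc X), fun a b hab ha hb ↦ ?_⟩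
    rw [h]
    exact mem_nc_nc_of_fountains hab ha hb
  · rintro ⟨hP, hfountains⟩
    refine (subset_nc_nc hX).antisymm ?_
    rintro ⟨a, b⟩ hab
    by_contra hnot
    exact hnot (hfountains a b hab.1 (hP.isLeftFountain_of_mem_nc_nc hab hnot)
      (hP.isRightFountain_of_mem_nc_nc hab hnot))

theorem IsPtolemy.fountains_of_lt {X : Set (ℤ × ℤ)} {a b : ℤ} (hP : IsPtolemy X) (hba : b < a)
    (ha : IsLeftFountain X a) (hb : IsRightFountain X b) :
    IsLeftFountain X b ∧ IsRightFountain X a := by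
  have exists_mem (M N : ℤ) : (∃ u < M, (u, b) ∈ X) ∧ ∃ v > N, (a, v) ∈ X := by
    obtain ⟨u, hu, hua⟩ := ha (min M (b - 1))
    obtain ⟨v, hv, hbv⟩ := hb (max N (a + 1))
    obtain ⟨hub, -, -, hav⟩ := hP u a b v hua hbv (by omega) hba (by omega)
    exact ⟨⟨u, by omega, hub (by omega)⟩, v, by omega, hav (by omega)⟩
  exact ⟨fun M ↦ (exists_mem M 0).1, fun N ↦ (exists_mem 0 N).2⟩

namespace Periodic

variable {n : ℤ} {X : Set (ℤ × ℤ)} {a b : ℤ}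

theorem isLeftFountain_add_mul (hper : Periodic n X) (ha : IsLeftFountain X a) (r : ℤ) :
    IsLeftFountain X (a + r * n) := by
  intro N
  obtain ⟨u, hu, hua⟩ := ha (N - r * n)
  exact ⟨u + r * n, lt_sub_iff_add_lt.1 hu, hper u a r hua⟩

theorem isRightFountain_add_mul (hper : Periodic n X) (hb : IsRightFountain X b) (r : ℤ) :
    IsRightFountain X (b + r * n) := by
  intro N
  obtain ⟨v, hv, hbv⟩ := hb (N - r * n)
  exact ⟨v + r * n, sub_lt_iff_lt_add.1 hv, hper b v r hbv⟩

theorem mem_of_fountains (hper : Periodic n X) (hn : 0 < n) (hP : IsPtolemy X)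
    (hab : IsArc (a, b)) (ha : IsLeftFountain X a) (hb : IsRightFountain X b) : (a, b) ∈ X := by
  have hlen : 2 ≤ b - a := hab
  obtain ⟨r, hr⟩ : ∃ r, b - a < r * n := ⟨_, Int.lt_ediv_add_one_mul_self (b - a) hn⟩
  have hb_left : IsLeftFountain X b :=
    (hP.fountains_of_lt (by linarith) (hper.isLeftFountain_add_mul ha r) hb).1
  have ha_right : IsRightFountain X a :=
    (hP.fountains_of_lt (by linarith) ha (hper.isRightFountain_add_mul hb (-r))).2
  obtain ⟨w, hwa, hwb⟩ := hb_left a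
  obtain ⟨v, hbv, hav⟩ := ha_right b
  exact (hP w b a v hwb hav hwa (by omega) hbv).2.2.1 hlen

end Periodic

/-- For an `n`-periodic collection `X` of arcs of the ∞-gon,
`X = nc (nc X)` if and only if `X` is a Ptolemy diagram. -/
theorem nc_nc_eq_iff_isPtolemy (n : ℤ) (hn : 1 ≤ n) (X : Set (ℤ × ℤ))
    (hX : ∀ a ∈ X, IsArc a) (hper : Periodic n X) :
    X = nc (nc X) ↔ IsPtolemy X :=
  (nc_nc_eq_iff_isPtolemy_general X hX).trans <| and_iff_left_of_imp fun hP _ _ ↦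
    hper.mem_of_fountains (by omega) hP
end

section
/- For every integer n ≥ 1, the set of n-periodic Ptolemy diagrams of the ∞-gon in which every arc has length at most n is finite, and its cardinality equals the sum over all integers ℓ ≥ 0 of 2^ℓ · C(n−1+ℓ, ℓ) · C(2n−1, n−1−2ℓ), where C(a,b) denotes the binomial coefficient (the summands vanish once n−1−2ℓ < 0, so the sum is finite). -/
/-- The `n`-periodic Ptolemy diagrams of the ∞-gon all of whose arcs have length
at most `n`. -/
def goodDiagrams (n : ℕ) : Set (Set (ℤ × ℤ)) :=
  {X | (∀ a ∈ X, IsArc a) ∧ Periodic (n : ℤ) X ∧ IsPtolemy X ∧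
    ∀ a ∈ X, a.2 - a.1 ≤ (n : ℤ)}

/-- `∑_{ℓ ≥ 0} 2^ℓ C(n−1+ℓ, ℓ) C(2n−1, n−1−2ℓ)`; the summands vanish for
`2ℓ > n − 1`, so the sum may be taken over `ℓ ≤ (n−1)/2`. -/
def torsionHalfCount (n : ℕ) : ℕ :=
  ∑ ℓ ∈ Finset.range ((n - 1) / 2 + 1),
    2 ^ ℓ * Nat.choose (n - 1 + ℓ) ℓ * Nat.choose (2 * n - 1) (n - 1 - 2 * ℓ)

/-!
A Ptolemy diagram is determined by its uncrossed arcs, which form a periodic dissection, together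
with the set of those cells of the dissection that are cliques: in every other cell no diagonal
belongs to the diagram.

Such a dissection is read from left to right. A vertex is visible as long as no arc already read
passes over it, so the visible vertices form a stack, and the left neighbours of the next vertex `j`
are described by their depths in this stack. The set of these depths, with the depths of arcs above
cliques marked, is the letter at `j`; its weight, the largest depth, is the number of vertices that
`j` removes from the stack. The diagram thus becomes an arbitrary cyclic word of `n` letters whose
weights sum up to less than `n`, so that the stack grows in each period.

Deleting the largest depth from a letter shows that the generating function `G` of the letters
satisfies `G = 1 + (X + X²) G / (1 - X)`, that is, `G = (1 - X)⁻¹ / (1 - B)` with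
`B = 2 X² / (1 - X)²`. The number of words is the coefficient of `X ^ (n - 1)` in
`G ^ n / (1 - X)`, and expanding `(1 - B)⁻ⁿ` in powers of `B` yields the sum over `ℓ`.
-/

namespace InfinityGon

section Integers

theorem exists_add_right_iff {n : ℤ} {P : ℤ → ℤ → Prop} :
    (∃ i j, P (i + n) (j + n)) ↔ ∃ i j, P i j :=
  (Equiv.addRight n).exists_congr_right.trans <|
    exists_congr fun _ => (Equiv.addRight n).exists_congr_right

theorem exists_longest {P : ℤ → ℤ → Prop} {n : ℤ} (hle : ∀ a b, P a b → b - a ≤ n)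
    (hex : ∃ a b, P a b) : ∃ a b, P a b ∧ ∀ c d, P c d → d - c ≤ b - a := by
  obtain ⟨a₀, b₀, h₀⟩ := hex
  obtain ⟨l, ⟨a, b, hab, rfl⟩, hmax⟩ := Int.exists_greatest_of_bdd
    (P := fun l => ∃ a b, P a b ∧ b - a = l)
    ⟨n, by rintro _ ⟨a, b, hab, rfl⟩; exact hle a b hab⟩ ⟨_, a₀, b₀, h₀, rfl⟩
  exact ⟨a, b, hab, fun c d hcd => hmax _ ⟨c, d, hcd, rfl⟩⟩

theorem map_emod_of_periodic {α : Type*} {f : ℤ → α} {c : ℤ} (hf : Function.Periodic f c) (j : ℤ) :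
    f (j % c) = f j := by
  rw [Int.emod_def, mul_comm]
  exact hf.sub_int_mul_eq (j / c)

theorem sum_range_natCast_zmod {M : Type*} [AddCommMonoid M] {n : ℕ} [NeZero n] (f : ZMod n → M) :
    ∑ k ∈ Finset.range n, f k = ∑ x, f x :=
  Finset.sum_nbij' (fun k => (k : ZMod n)) ZMod.val (by simp) (by simp [ZMod.val_lt])
    (fun k hk => ZMod.val_cast_of_lt (Finset.mem_range.1 hk)) (by simp) (by simp)

end Integers

section PowerSums

open PowerSeries in
theorem coeff_mul_mk_one {R : Type*} [Semiring R] (f : R⟦X⟧) (m : ℕ) :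
    coeff m (f * mk 1) = ∑ k ∈ Finset.range (m + 1), coeff k f := by
  rw [coeff_mul, Finset.Nat.sum_antidiagonal_eq_sum_range_succ_mk]
  simp

theorem one_sub_mul_sum_choose_mul_pow {R : Type*} [CommRing R] (B : R) (d L : ℕ) :
    (1 - B) * ∑ l ∈ Finset.range L, ((d + 1 + l).choose l : R) * B ^ l =
      ∑ l ∈ Finset.range L, ((d + l).choose l : R) * B ^ l - (d + L).choose (d + 1) * B ^ L := by
  induction L with
  | zero => simp
  | succ L ih =>
    have hpascal : (d + 1 + L).choose L = (d + L).choose L + (d + L).choose (d + 1) := by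
      rw [← Nat.choose_symm_add, ← Nat.choose_symm_add, add_right_comm, Nat.choose_succ_succ]
    have hlast : (d + (L + 1)).choose (d + 1) = (d + 1 + L).choose L := by
      rw [← Nat.choose_symm_add, add_right_comm, add_assoc]
    rw [Finset.sum_range_succ, Finset.sum_range_succ, mul_add, ih, hlast, hpascal]
    push_cast
    ring

theorem pow_dvd_one_sub_pow_mul_sum_choose_sub_one {R : Type*} [CommRing R] (B : R) (d L : ℕ) :
    B ^ L ∣ (1 - B) ^ (d + 1) * ∑ l ∈ Finset.range L, ((d + l).choose l : R) * B ^ l - 1 := by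
  induction d with
  | zero => simp [mul_neg_geom_sum]
  | succ d ih =>
    rw [pow_succ, mul_assoc, one_sub_mul_sum_choose_mul_pow, mul_sub, sub_right_comm]
    exact ih.sub (Dvd.intro_left _ (mul_assoc _ _ _))

end PowerSums

/-- An `n`-periodic collection of arcs of length at most `n`, as a relation between the left and
the right endpoint. Unlike in `IsArc`, the edges `(i, i + 1)` count as arcs and always belong to the
collection, which frees the Ptolemy condition of its side conditions on lengths. -/
structure IsArcSystem (n : ℤ) (E : ℤ → ℤ → Prop) : Prop where
  lt : ∀ {i j}, E i j → i < j
  sub_le : ∀ {i j}, E i j → j - i ≤ n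
  edge : ∀ i, E i (i + 1)
  shift : ∀ i j, E (i + n) (j + n) ↔ E i j

/-- An arc system satisfying the Ptolemy condition. -/
structure IsPtolemySystem (n : ℤ) (E : ℤ → ℤ → Prop) : Prop extends IsArcSystem n E where
  ptolemy : ∀ {i j r s}, E i j → E r s → i < r → r < j → j < s → E i r ∧ E i s ∧ E r j ∧ E j s

/-- An arc system without crossings. -/
structure IsDissection (n : ℤ) (N : ℤ → ℤ → Prop) : Prop extends IsArcSystem n N where
  noncrossing : ∀ {i j r s}, N i j → N r s → ¬ (i < r ∧ r < j ∧ j < s)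

/-- `p` is a vertex of the cell of the dissection `N` directly below its arc `(i, j)`: no other arc
of `N` below `(i, j)` separates `p` from `(i, j)`. -/
def IsCellVertex (N : ℤ → ℤ → Prop) (i j p : ℤ) : Prop :=
  i ≤ p ∧ p ≤ j ∧ ∀ a b, N a b → i ≤ a → b ≤ j → a < p → p < b → a = i ∧ b = j

/-- A dissection `N` into cells, some of which are declared to be cliques. A cell is named by the
arc above it, so the cliques form a subset `C` of `N`; the cell of a clique has at least four
vertices, as a triangle has no diagonals. -/
structure IsCliqueDissection (n : ℤ) (N C : ℤ → ℤ → Prop) : Prop extends IsDissection n N where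
  arc_of_clique : ∀ {i j}, C i j → N i j
  clique_shift : ∀ i j, C (i + n) (j + n) ↔ C i j
  exists_inner_vertices : ∀ {i j}, C i j →
    ∃ p q, i < p ∧ p < q ∧ q < j ∧ IsCellVertex N i j p ∧ IsCellVertex N i j q

/-- The arcs of `N` together with all diagonals of the cells in `C`. -/
def fillCliques (N C : ℤ → ℤ → Prop) (p q : ℤ) : Prop :=
  N p q ∨ p < q ∧ ∃ i j, C i j ∧ IsCellVertex N i j p ∧ IsCellVertex N i j q

/-- The arcs of `E` that cross no arc of `E`. -/
def uncrossed (E : ℤ → ℤ → Prop) (i j : ℤ) : Prop :=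
  E i j ∧ ∀ r s, E r s → ¬ Cross (i, j) (r, s)

/-- The uncrossed arcs `(i, j)` of `E` whose cell is a clique. It suffices to ask for two crossing
diagonals, one from `i` and one from `j`. -/
def cliqueTops (E : ℤ → ℤ → Prop) (i j : ℤ) : Prop :=
  uncrossed E i j ∧ ∃ u b, i < u ∧ u < b ∧ b < j ∧ E i b ∧ E u j

theorem isCellVertex_left {N : ℤ → ℤ → Prop} {i j : ℤ} (h : i ≤ j) : IsCellVertex N i j i :=
  ⟨le_rfl, h, fun _ _ _ hia _ hai _ => absurd hai hia.not_gt⟩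

theorem isCellVertex_right {N : ℤ → ℤ → Prop} {i j : ℤ} (h : i ≤ j) : IsCellVertex N i j j :=
  ⟨h, le_rfl, fun _ _ _ _ hbj _ hjb => absurd hjb hbj.not_gt⟩

section Shift

variable {n : ℤ} {E C : ℤ → ℤ → Prop}

theorem IsArcSystem.forall_arc_iff (h : IsArcSystem n E) {P : ℤ → ℤ → Prop} :
    (∀ i j, E i j → P i j) ↔ ∀ i j, E i j → P (i + n) (j + n) := by
  refine ⟨fun hP i j hE => hP _ _ ((h.shift i j).2 hE), fun hP i j hE => ?_⟩
  have hE' : E (i - n) (j - n) := (h.shift _ _).1 (by simpa using hE)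
  simpa using hP _ _ hE'

theorem IsArcSystem.isCellVertex_shift (h : IsArcSystem n E) (i j p : ℤ) :
    IsCellVertex E (i + n) (j + n) (p + n) ↔ IsCellVertex E i j p := by
  unfold IsCellVertex
  rw [h.forall_arc_iff]
  simp only [add_le_add_iff_right, add_lt_add_iff_right, add_left_inj]

theorem IsArcSystem.uncrossed_shift (h : IsArcSystem n E) (i j : ℤ) :
    uncrossed E (i + n) (j + n) ↔ uncrossed E i j := by
  unfold uncrossed
  rw [h.shift, h.forall_arc_iff]
  simp only [Cross, add_lt_add_iff_right]

theorem IsArcSystem.cliqueTops_shift (h : IsArcSystem n E) (i j : ℤ) :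
    cliqueTops E (i + n) (j + n) ↔ cliqueTops E i j := by
  unfold cliqueTops
  rw [h.uncrossed_shift, ← exists_add_right_iff (n := n)]
  simp only [add_lt_add_iff_right, h.shift]

theorem IsCliqueDissection.fillCliques_shift (h : IsCliqueDissection n E C) (p q : ℤ) :
    fillCliques E C (p + n) (q + n) ↔ fillCliques E C p q := by
  unfold fillCliques
  rw [h.shift, ← exists_add_right_iff (n := n)]
  simp only [add_lt_add_iff_right, h.clique_shift, h.isCellVertex_shift]

end Shift

section FillCliques

variable {n : ℤ} {N C : ℤ → ℤ → Prop}

theorem IsDissection.not_cross_of_isCellVertex (h : IsDissection n N) {a b i j p q : ℤ}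
    (hab : N a b) (hij : N i j) (hp : IsCellVertex N i j p) (hq : IsCellVertex N i j q) :
    ¬ Cross (a, b) (p, q) := by
  have hnc := h.noncrossing hab hij
  have hnc' := h.noncrossing hij hab
  have hpab := hp.2.2 a b hab
  have hqab := hq.2.2 a b hab
  obtain ⟨hip, -, -⟩ := hp
  obtain ⟨-, hqj, -⟩ := hq
  unfold Cross
  omega

theorem IsCliqueDissection.not_cross_fillCliques (h : IsCliqueDissection n N C) {a b p q : ℤ}
    (hab : N a b) (hpq : fillCliques N C p q) : ¬ Cross (a, b) (p, q) := by
  rcases hpq with hpq | ⟨-, i, j, hC, hp, hq⟩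
  · have := h.noncrossing hab hpq
    have := h.noncrossing hpq hab
    unfold Cross
    omega
  · exact h.not_cross_of_isCellVertex hab (h.arc_of_clique hC) hp hq

theorem IsDissection.cell_unique (h : IsDissection n N) {i j i' j' p q r s : ℤ} (hij : N i j)
    (hij' : N i' j') (hp : IsCellVertex N i j p) (hq : IsCellVertex N i j q)
    (hr : IsCellVertex N i' j' r) (hs : IsCellVertex N i' j' s) (hpr : p < r) (hrq : r < q)
    (hqs : q < s) : i = i' ∧ j = j' := by
  have hnc := h.noncrossing hij hij'
  have hnc' := h.noncrossing hij' hij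
  have hq' := hq.2.2 i' j' hij'
  have hr' := hr.2.2 i j hij
  obtain ⟨hip, hpj, -⟩ := hp
  obtain ⟨-, hqj, -⟩ := hq
  obtain ⟨hir, hrj, -⟩ := hr
  obtain ⟨-, hsj, -⟩ := hs
  omega

theorem IsCliqueDissection.exists_clique_of_cross (h : IsCliqueDissection n N C) {p q r s : ℤ}
    (hpq : fillCliques N C p q) (hrs : fillCliques N C r s) (hpr : p < r) (hrq : r < q)
    (hqs : q < s) :
    ∃ i j, C i j ∧ IsCellVertex N i j p ∧ IsCellVertex N i j q ∧ IsCellVertex N i j r ∧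
      IsCellVertex N i j s := by
  rcases id hpq with hN | ⟨-, i, j, hC, hp, hq⟩
  · exact absurd (Or.inl ⟨hpr, hrq, hqs⟩) (h.not_cross_fillCliques hN hrs)
  rcases id hrs with hN | ⟨-, i', j', hC', hr, hs⟩
  · exact absurd (Or.inr ⟨hpr, hrq, hqs⟩) (h.not_cross_fillCliques hN hpq)
  obtain ⟨rfl, rfl⟩ :=
    h.cell_unique (h.arc_of_clique hC) (h.arc_of_clique hC') hp hq hr hs hpr hrq hqs
  exact ⟨i, j, hC, hp, hq, hr, hs⟩

theorem IsCliqueDissection.isPtolemySystem_fillCliques (h : IsCliqueDissection n N C) :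
    IsPtolemySystem n (fillCliques N C) where
  lt := by
    rintro p q (hN | ⟨hpq, -⟩)
    exacts [h.lt hN, hpq]
  sub_le := by
    rintro p q (hN | ⟨-, i, j, hC, ⟨hip, -, -⟩, ⟨-, hqj, -⟩⟩)
    · exact h.sub_le hN
    · have := h.sub_le (h.arc_of_clique hC)
      omega
  edge i := Or.inl (h.edge i)
  shift := h.fillCliques_shift
  ptolemy hpq hrs hpr hrq hqs := by
    obtain ⟨i, j, hC, hp, hq, hr, hs⟩ := h.exists_clique_of_cross hpq hrs hpr hrq hqs
    exact ⟨.inr ⟨hpr, i, j, hC, hp, hr⟩, .inr ⟨by omega, i, j, hC, hp, hs⟩,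
      .inr ⟨hrq, i, j, hC, hr, hq⟩, .inr ⟨hqs, i, j, hC, hq, hs⟩⟩

theorem IsDissection.exists_isCellVertex_between (h : IsDissection n N) {i j p q : ℤ}
    (hp : IsCellVertex N i j p) (hq : IsCellVertex N i j q) (hpq : p < q) (hN : ¬ N p q) :
    ∃ r, p < r ∧ r < q ∧ IsCellVertex N i j r := by
  obtain ⟨r, ⟨hpr, hrq⟩, hmax⟩ := Int.exists_greatest_of_bdd (P := fun r => N p r ∧ r ≤ q)
    ⟨q, fun _ hr => hr.2⟩ ⟨p + 1, h.edge p, hpq⟩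
  have hne : r ≠ q := fun hrq => hN (hrq ▸ hpr)
  have hlt := h.lt hpr
  refine ⟨r, hlt, by omega, by grind [IsCellVertex], by grind [IsCellVertex],
    fun a b hab hia hbj har hrb => ?_⟩
  rcases lt_trichotomy a p with hap | rfl | hpa
  · exact hp.2.2 a b hab hia hbj hap (by omega)
  · have : q < b := not_le.1 fun hbq => hrb.not_ge (hmax b ⟨hab, hbq⟩)
    exact hq.2.2 a b hab hia hbj hpq this
  · exact absurd ⟨hpa, har, hrb⟩ (h.noncrossing hpr hab)

theorem IsCliqueDissection.uncrossed_fillCliques (h : IsCliqueDissection n N C) :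
    uncrossed (fillCliques N C) = N := by
  ext p q
  refine ⟨fun ⟨hpq, hnc⟩ => ?_, fun hN => ⟨.inl hN, fun r s => h.not_cross_fillCliques hN⟩⟩
  rcases hpq with hN | ⟨hlt, i, j, hC, hp, hq⟩
  · exact hN
  by_contra hN
  obtain ⟨r, hpr, hrq, hr⟩ := h.exists_isCellVertex_between hp hq hlt hN
  have hij := h.lt (h.arc_of_clique hC)
  rcases hp.1.eq_or_lt with rfl | hip
  · have hqj : q ≠ j := fun hqj => hN (hqj ▸ h.arc_of_clique hC)
    exact hnc r j (.inr ⟨hrq.trans_le hq.2.1, i, j, hC, hr, isCellVertex_right hij.le⟩)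
      (.inl ⟨hpr, hrq, hq.2.1.lt_of_ne hqj⟩)
  · exact hnc i r (.inr ⟨hip.trans hpr, i, j, hC, isCellVertex_left hij.le, hr⟩)
      (.inr ⟨hip, hpr, hrq⟩)

theorem IsCliqueDissection.cliqueTops_fillCliques (h : IsCliqueDissection n N C) :
    cliqueTops (fillCliques N C) = C := by
  ext i j
  unfold cliqueTops
  rw [h.uncrossed_fillCliques]
  constructor
  · rintro ⟨hij, u, b, hiu, hub, hbj, hib, huj⟩
    obtain ⟨i', j', hC, hi, -, hu, hj⟩ := h.exists_clique_of_cross hib huj hiu hub hbj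
    obtain ⟨rfl, rfl⟩ := hu.2.2 i j hij hi.1 hj.2.1 hiu (hub.trans hbj)
    exact hC
  · intro hC
    have hij := h.lt (h.arc_of_clique hC)
    obtain ⟨p, q, hip, hpq, hqj, hp, hq⟩ := h.exists_inner_vertices hC
    exact ⟨h.arc_of_clique hC, p, q, hip, hpq, hqj,
      .inr ⟨by omega, i, j, hC, isCellVertex_left hij.le, hq⟩,
      .inr ⟨by omega, i, j, hC, hp, isCellVertex_right hij.le⟩⟩

end FillCliques

section Ptolemy

/-- `a ≤ c < d ≤ b` are joined by arcs of `E`, as far as they are distinct, except possibly `a` to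
`b`. If some arc crosses `(c, d)`, then one of its endpoints splits this configuration into two of
the same kind, which allows induction on `d - c`. -/
structure IsJoined (E : ℤ → ℤ → Prop) (a c d b : ℤ) : Prop where
  inner : E c d
  left : a = c ∨ E a c
  left_right : E a d
  right_left : E c b
  right : d = b ∨ E d b

variable {n : ℤ} {E : ℤ → ℤ → Prop}

theorem IsArcSystem.le_of_isJoined (h : IsArcSystem n E) {a b c d : ℤ}
    (hj : IsJoined E a c d b) : a ≤ c ∧ d ≤ b :=
  ⟨hj.left.elim le_of_eq fun hac => (h.lt hac).le, hj.right.elim le_of_eq fun hdb => (h.lt hdb).le⟩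

theorem IsPtolemySystem.isJoined_of_cross_right (h : IsPtolemySystem n E) {a b c d r s : ℤ}
    (hj : IsJoined E a c d b) (hrs : E r s) (hcr : c < r) (hrd : r < d) (hds : d < s) :
    IsJoined E a c r b ∧ IsJoined E a r d b := by
  obtain ⟨hcr', -, hrd', -⟩ := h.ptolemy hj.inner hrs hcr hrd hds
  obtain ⟨hac, hdb⟩ := h.le_of_isJoined hj
  have har : E a r := (h.ptolemy hj.left_right hrs (hac.trans_lt hcr) hrd hds).1
  have hrb : E r b := by
    rcases lt_trichotomy s b with hsb | rfl | hbs
    · exact (h.ptolemy hrs (hj.right.resolve_left (by omega)) hrd hds hsb).2.1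
    · exact hrs
    · exact (h.ptolemy hj.right_left hrs hcr (hrd.trans_le hdb) hbs).2.2.1
  exact ⟨⟨hcr', hj.left, har, hj.right_left, .inr hrb⟩,
    ⟨hrd', .inr har, hj.left_right, hrb, hj.right⟩⟩

theorem IsPtolemySystem.isJoined_of_cross_left (h : IsPtolemySystem n E) {a b c d r s : ℤ}
    (hj : IsJoined E a c d b) (hrs : E r s) (hrc : r < c) (hcs : c < s) (hsd : s < d) :
    IsJoined E a c s b ∧ IsJoined E a s d b := by
  obtain ⟨-, -, hcs', hsd'⟩ := h.ptolemy hrs hj.inner hrc hcs hsd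
  obtain ⟨hac, hdb⟩ := h.le_of_isJoined hj
  have hsb : E s b := (h.ptolemy hrs hj.right_left hrc hcs (hsd.trans_le hdb)).2.2.2
  have has : E a s := by
    rcases lt_trichotomy r a with hra | rfl | har
    · exact (h.ptolemy hrs hj.left_right hra (hac.trans_lt hcs) hsd).2.2.1
    · exact hrs
    · exact (h.ptolemy (hj.left.resolve_left (by omega)) hrs har hrc hcs).2.1
  exact ⟨⟨hcs', hj.left, has, hj.right_left, .inr hsb⟩,
    ⟨hsd', .inr has, hj.left_right, hsb, hj.right⟩⟩

theorem IsPtolemySystem.exists_isJoined_of_not_uncrossed (h : IsPtolemySystem n E) {a b c d : ℤ}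
    (hj : IsJoined E a c d b) (hcd : ¬ uncrossed E c d) :
    ∃ u, c < u ∧ u < d ∧ IsJoined E a c u b ∧ IsJoined E a u d b := by
  simp only [uncrossed, hj.inner, true_and] at hcd
  push Not at hcd
  obtain ⟨r, s, hrs, ⟨hcr, hrd, hds⟩ | ⟨hrc, hcs, hsd⟩⟩ := hcd
  · exact ⟨r, hcr, hrd, h.isJoined_of_cross_right hj hrs hcr hrd hds⟩
  · exact ⟨s, hcs, hsd, h.isJoined_of_cross_left hj hrs hrc hcs hsd⟩

theorem IsPtolemySystem.arcs_to_of_isJoined (h : IsPtolemySystem n E) {a b c d x : ℤ}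
    (hj : IsJoined E a c d b) (hcx : c < x) (hxd : x < d)
    (hx : ∀ r s, uncrossed E r s → a ≤ r → s ≤ b → ¬ (r < x ∧ x < s)) : E a x ∧ E x b := by
  obtain ⟨hac, hdb⟩ := h.le_of_isJoined hj
  obtain ⟨u, _, _, hj₁, hj₂⟩ :=
    h.exists_isJoined_of_not_uncrossed hj fun hcd => hx c d hcd hac hdb ⟨hcx, hxd⟩
  rcases lt_trichotomy u x with hux | rfl | hxu
  · exact h.arcs_to_of_isJoined hj₂ hux hxd hx
  · exact ⟨hj₁.left_right, hj₂.right_left⟩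
  · exact h.arcs_to_of_isJoined hj₁ hcx hxu hx
termination_by (d - c).toNat
decreasing_by all_goals omega

theorem IsPtolemySystem.arcs_to_isCellVertex (h : IsPtolemySystem n E) {i j a b x : ℤ}
    (hx : IsCellVertex (uncrossed E) i j x) (hia : i ≤ a) (hbj : b ≤ j) (hne : ¬ (a = i ∧ b = j))
    (hab : E a b) (hax : a < x) (hxb : x < b) : E a x ∧ E x b := by
  refine h.arcs_to_of_isJoined ⟨hab, .inl rfl, hab, hab, .inl rfl⟩ hax hxb ?_
  rintro r s hrs har hsb ⟨hrx, hxs⟩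
  have := hx.2.2 r s hrs (by omega) (by omega) hrx hxs
  omega

theorem IsPtolemySystem.cliqueTops_of_not_uncrossed (h : IsPtolemySystem n E) {i j p q : ℤ}
    (hij : uncrossed E i j) (hp : IsCellVertex (uncrossed E) i j p)
    (hq : IsCellVertex (uncrossed E) i j q) (hpq : E p q) (hnot : ¬ uncrossed E p q) :
    cliqueTops E i j := by
  have hlt := h.lt hpq
  obtain ⟨a, b, ⟨hab, hia, hbj, hne, hap, hqb⟩, hmax⟩ := exists_longest
    (P := fun a b => E a b ∧ i ≤ a ∧ b ≤ j ∧ ¬ (a = i ∧ b = j) ∧ a ≤ p ∧ q ≤ b)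
    (fun a b hab => h.sub_le hab.1)
    ⟨p, q, hpq, hp.1, hq.2.1, by rintro ⟨rfl, rfl⟩; exact hnot hij, le_rfl, le_rfl⟩
  have hcrossed : ¬ uncrossed E a b := fun hunc => by
    have hp' := hp.2.2 a b hunc hia hbj
    have hq' := hq.2.2 a b hunc hia hbj
    have : ¬ (a = p ∧ b = q) := by rintro ⟨rfl, rfl⟩; exact hnot hunc
    omega
  simp only [uncrossed, hab, true_and] at hcrossed
  push Not at hcrossed
  obtain ⟨r, s, hrs, hcross⟩ := hcrossed
  have hrs' := hij.2 r s hrs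
  simp only [Cross] at hrs'
  rcases hcross with ⟨har, hrb, hbs⟩ | ⟨hra, has, hsb⟩ <;> dsimp only at *
  · obtain ⟨-, has, -⟩ := h.ptolemy hab hrs har hrb hbs
    have hmax' := mt (fun hne' => hmax a s ⟨has, hia, by omega, hne', hap, by omega⟩) (by omega)
    obtain ⟨rfl, rfl⟩ := not_not.1 hmax'
    exact ⟨hij, r, b, har, hrb, hbs, hab, hrs⟩
  · obtain ⟨-, hrb, -⟩ := h.ptolemy hrs hab hra has hsb
    have hmax' := mt (fun hne' => hmax r b ⟨hrb, by omega, hbj, hne', by omega, hqb⟩) (by omega)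
    obtain ⟨rfl, rfl⟩ := not_not.1 hmax'
    exact ⟨hij, a, s, hra, has, hsb, hrs, hab⟩

theorem IsPtolemySystem.arcs_to_of_cliqueTops (h : IsPtolemySystem n E) {i j x : ℤ}
    (hij : cliqueTops E i j) (hx : IsCellVertex (uncrossed E) i j x) (hix : i < x) (hxj : x < j) :
    E i x ∧ E x j := by
  obtain ⟨-, u, b, hiu, hub, hbj, hib, huj⟩ := hij
  have hb := h.arcs_to_isCellVertex hx le_rfl hbj.le (by omega) hib hix
  have hu := fun hux => h.arcs_to_isCellVertex hx hiu.le le_rfl (by omega) huj hux hxj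
  constructor
  · rcases lt_trichotomy x b with hxb | rfl | hbx
    · exact (hb hxb).1
    · exact hib
    · exact (h.ptolemy hib (hu (hub.trans hbx)).1 hiu hub hbx).2.1
  · rcases lt_trichotomy x u with hxu | rfl | hux
    · exact (h.ptolemy (hb (hxu.trans hub)).2 huj hxu hub hbj).2.1
    · exact huj
    · exact (hu hux).2

theorem IsPtolemySystem.arc_of_cliqueTops (h : IsPtolemySystem n E) {i j p q : ℤ}
    (hij : cliqueTops E i j) (hp : IsCellVertex (uncrossed E) i j p)
    (hq : IsCellVertex (uncrossed E) i j q) (hpq : p < q) : E p q := by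
  rcases hp.1.eq_or_lt with rfl | hip <;> rcases hq.2.1.eq_or_lt with rfl | hqj
  · exact hij.1.1
  · exact (h.arcs_to_of_cliqueTops hij hq hpq hqj).1
  · exact (h.arcs_to_of_cliqueTops hij hp hip hpq).2
  · have hiq := (h.arcs_to_of_cliqueTops hij hq (hip.trans hpq) hqj).1
    exact (h.arcs_to_isCellVertex hp le_rfl hqj.le (by omega) hiq hip hpq).2

theorem isCellVertex_of_cross {i j u b : ℤ} (hiu : i < u) (hub : u < b) (hbj : b < j)
    (hib : E i b) (huj : E u j) :
    IsCellVertex (uncrossed E) i j u ∧ IsCellVertex (uncrossed E) i j b := by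
  refine ⟨⟨hiu.le, by omega, fun r s hrs hir hsj hru hus => ?_⟩,
    ⟨by omega, hbj.le, fun r s hrs hir hsj hrb hbs => ?_⟩⟩ <;>
  · have hib' := hrs.2 i b hib
    have huj' := hrs.2 u j huj
    simp only [Cross] at hib' huj'
    omega

theorem IsPtolemySystem.isCliqueDissection (h : IsPtolemySystem n E) :
    IsCliqueDissection n (uncrossed E) (cliqueTops E) where
  lt hij := h.lt hij.1
  sub_le hij := h.sub_le hij.1
  edge i := ⟨h.edge i, fun r s _ => by simp only [Cross]; omega⟩
  shift := h.uncrossed_shift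
  noncrossing hij hrs hcross := hij.2 _ _ hrs.1 (.inl hcross)
  arc_of_clique hij := hij.1
  clique_shift := h.cliqueTops_shift
  exists_inner_vertices := by
    rintro i j ⟨-, u, b, hiu, hub, hbj, hib, huj⟩
    exact ⟨u, b, hiu, hub, hbj, isCellVertex_of_cross hiu hub hbj hib huj⟩

theorem IsPtolemySystem.exists_uncrossed_above (h : IsPtolemySystem n E) {p q : ℤ} (hpq : E p q) :
    ∃ i j, uncrossed E i j ∧ i ≤ p ∧ q ≤ j := by
  obtain ⟨i, j, ⟨hij, hip, hqj⟩, hmax⟩ := exists_longest (P := fun a b => E a b ∧ a ≤ p ∧ q ≤ b)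
    (fun a b hab => h.sub_le hab.1) ⟨p, q, hpq, le_rfl, le_rfl⟩
  refine ⟨i, j, ⟨hij, fun r s hrs hcross => ?_⟩, hip, hqj⟩
  rcases hcross with ⟨hir, hrj, hjs⟩ | ⟨hri, his, hsj⟩ <;> dsimp only at *
  · have := hmax i s ⟨(h.ptolemy hij hrs hir hrj hjs).2.1, hip, by omega⟩
    omega
  · have := hmax r j ⟨(h.ptolemy hrs hij hri his hsj).2.1, by omega, hqj⟩
    omega

theorem IsPtolemySystem.exists_cell (h : IsPtolemySystem n E) {p q : ℤ} (hpq : E p q) :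
    ∃ i j, uncrossed E i j ∧ IsCellVertex (uncrossed E) i j p ∧
      IsCellVertex (uncrossed E) i j q := by
  have hlt := h.lt hpq
  obtain ⟨i₀, j₀, h₀⟩ := h.exists_uncrossed_above hpq
  obtain ⟨j, i, ⟨hij, hip, hqj⟩, hmin⟩ := exists_longest
    (P := fun b a => uncrossed E a b ∧ a ≤ p ∧ q ≤ b) (n := 0) (fun b a hab => by omega)
    ⟨j₀, i₀, h₀⟩
  refine ⟨i, j, hij, ⟨hip, by omega, fun a b hab hia hbj hap hpb => ?_⟩,
    ⟨by omega, hqj, fun a b hab hia hbj haq hqb => ?_⟩⟩ <;>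
  · have hncr := hab.2 p q hpq
    simp only [Cross] at hncr
    have := hmin b a ⟨hab, by omega, by omega⟩
    omega

theorem IsPtolemySystem.fillCliques_uncrossed (h : IsPtolemySystem n E) :
    fillCliques (uncrossed E) (cliqueTops E) = E := by
  ext p q
  constructor
  · rintro (hpq | ⟨hlt, i, j, hC, hp, hq⟩)
    · exact hpq.1
    · exact h.arc_of_cliqueTops hC hp hq hlt
  · intro hpq
    obtain ⟨i, j, hij, hp, hq⟩ := h.exists_cell hpq
    exact or_iff_not_imp_left.2 fun hnot =>
      ⟨h.lt hpq, i, j, h.cliqueTops_of_not_uncrossed hij hp hq hpq hnot, hp, hq⟩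

end Ptolemy

section SuffixMin

/-- `h i` is a strict minimum of `h` on the interval from `i` to `j`. -/
def IsSuffixMin (h : ℤ → ℤ) (j i : ℤ) : Prop :=
  i ≤ j ∧ ∀ m, i < m → m ≤ j → h i < h m

variable {h : ℤ → ℤ} {i j k : ℤ}

theorem isSuffixMin_self (h : ℤ → ℤ) (j : ℤ) : IsSuffixMin h j j :=
  ⟨le_rfl, fun _ hjm hmj => absurd hjm hmj.not_gt⟩

theorem IsSuffixMin.lt_iff_lt (hi : IsSuffixMin h j i) (hk : IsSuffixMin h j k) :
    h i < h k ↔ i < k := by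
  refine ⟨fun hlt => not_le.1 fun hki => ?_, fun hik => hi.2 k hik hk.1⟩
  rcases hki.eq_or_lt with rfl | hki
  · exact lt_irrefl _ hlt
  · exact hlt.asymm (hk.2 i hki hi.1)

theorem IsSuffixMin.eq_of_eq (hi : IsSuffixMin h j i) (hk : IsSuffixMin h j k) (heq : h i = h k) :
    i = k :=
  le_antisymm (not_lt.1 fun hki => heq.not_gt ((hk.lt_iff_lt hi).2 hki))
    (not_lt.1 fun hik => heq.not_lt ((hi.lt_iff_lt hk).2 hik))

theorem IsSuffixMin.apply_le (hi : IsSuffixMin h j i) : h i ≤ h j :=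
  hi.1.eq_or_lt.elim (fun hij => hij ▸ le_rfl) fun hij => (hi.2 j hij le_rfl).le

theorem exists_isSuffixMin_eq (hstep : ∀ m, h m ≤ h (m - 1) + 1) {c : ℤ} (hij : i ≤ j)
    (hic : h i ≤ c) (hcj : c ≤ h j) : ∃ k, IsSuffixMin h j k ∧ h k = c := by
  obtain ⟨k, ⟨hkj, hkc⟩, hmax⟩ := Int.exists_greatest_of_bdd (P := fun k => k ≤ j ∧ h k ≤ c)
    ⟨j, fun k hk => hk.1⟩ ⟨i, hij, hic⟩
  have habove : ∀ m, k < m → m ≤ j → c < h m := fun m hkm hmj =>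
    not_le.1 fun hmc => hkm.not_ge (hmax m ⟨hmj, hmc⟩)
  refine ⟨k, ⟨hkj, fun m hkm hmj => hkc.trans_lt (habove m hkm hmj)⟩, ?_⟩
  rcases hkj.eq_or_lt with rfl | hkj
  · exact le_antisymm hkc hcj
  · have hnext := habove (k + 1) (by omega) (by omega)
    have hjump := hstep (k + 1)
    rw [add_sub_cancel_right] at hjump
    omega

open Classical in
theorem IsSuffixMin.card_between (hstep : ∀ m, h m ≤ h (m - 1) + 1) (hi : IsSuffixMin h j i) :
    (({k ∈ Finset.Ioc i j | IsSuffixMin h j k}.card : ℕ) : ℤ) = h j - h i := by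
  have hcard : {k ∈ Finset.Ioc i j | IsSuffixMin h j k}.card = (Finset.Ioc (h i) (h j)).card := by
    refine Finset.card_bij (fun k _ => h k) (fun k hk => ?_) (fun k hk m hm heq => ?_)
      (fun c hc => ?_)
    · simp only [Finset.mem_filter, Finset.mem_Ioc] at hk ⊢
      exact ⟨hi.2 k hk.1.1 hk.1.2, hk.2.apply_le⟩
    · simp only [Finset.mem_filter] at hk hm
      exact hk.2.eq_of_eq hm.2 heq
    · rw [Finset.mem_Ioc] at hc
      obtain ⟨k, hk, rfl⟩ := exists_isSuffixMin_eq hstep hi.1 hc.1.le hc.2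
      have hlt := (hi.lt_iff_lt hk).1 hc.1
      exact ⟨k, by simp [hlt, hk.1, hk], rfl⟩
  rw [hcard, Int.card_Ioc, Int.toNat_of_nonneg (sub_nonneg.2 hi.apply_le)]

end SuffixMin

section Visible

/-- No arc of `N` ending at or before `j` passes over `i`. -/
def Visible (N : ℤ → ℤ → Prop) (j i : ℤ) : Prop :=
  i ≤ j ∧ ∀ a b, N a b → a < i → i < b → j < b

variable {n : ℤ} {N : ℤ → ℤ → Prop} {i j : ℤ}

theorem visible_self (N : ℤ → ℤ → Prop) (j : ℤ) : Visible N j j :=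
  ⟨le_rfl, fun _ _ _ _ hjb => hjb⟩

theorem Visible.mono {m : ℤ} (hi : Visible N j i) (him : i ≤ m) (hmj : m ≤ j) : Visible N m i :=
  ⟨him, fun a b hab hai hib => hmj.trans_lt (hi.2 a b hab hai hib)⟩

theorem IsArcSystem.visible_shift (hN : IsArcSystem n N) :
    Visible N (j + n) (i + n) ↔ Visible N j i := by
  unfold Visible
  rw [hN.forall_arc_iff]
  simp only [add_le_add_iff_right, add_lt_add_iff_right]

theorem IsDissection.visible_of_arc (hN : IsDissection n N) (hij : N i j) :
    Visible N (j - 1) i := by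
  have hlt := hN.lt hij
  refine ⟨by omega, fun a b hab hai hib => ?_⟩
  have := hN.noncrossing hab hij
  omega

theorem IsDissection.visible_of_isCellVertex (hN : IsDissection n N) {p : ℤ} (hij : N i j)
    (hp : IsCellVertex N i j p) (hpj : p < j) : Visible N (j - 1) p := by
  refine ⟨by omega, fun a b hab hap hpb => ?_⟩
  have hcell := hp.2.2 a b hab
  have hnc := hN.noncrossing hab hij
  have := hp.1
  omega

theorem IsDissection.exists_visible_period (hN : IsDissection n N) (hn : 0 ≤ n) :
    ∃ v, Visible N (v + n) v := by
  obtain ⟨u, v, huv, hmax⟩ := exists_longest (fun a b hab => hN.sub_le hab) ⟨0, 1, hN.edge 0⟩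
  refine ⟨v, by omega, fun a b hab hav hvb => ?_⟩
  have := hmax a b hab
  have := hN.noncrossing huv hab
  omega

end Visible

section Depth

open Classical in
/-- The number of later positions visible at `j`, i.e. the position of `i` in the stack of visible
positions. -/
noncomputable def depth (N : ℤ → ℤ → Prop) (j i : ℤ) : ℕ :=
  {k ∈ Finset.Ioc i j | Visible N j k}.card

open Classical in
/-- The depths, just before `j`, of the left endpoints of the arcs of `A` ending at `j`. -/
noncomputable def leftDepths (n : ℤ) (N A : ℤ → ℤ → Prop) (j : ℤ) : Finset ℕ :=
  {i ∈ Finset.Ico (j - n) j | A i j}.image (depth N (j - 1))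

/-- The arcs `(i, j)` such that the height of `i` is a strict minimum up to `j - 1` and lies below
that of `j - 1` by an element of `S j`. -/
def arcsOfDepths (h : ℤ → ℤ) (S : ℤ → Finset ℕ) (i j : ℤ) : Prop :=
  IsSuffixMin h (j - 1) i ∧ ∃ t ∈ S j, h (j - 1) - h i = t

variable {n : ℤ} {N C A : ℤ → ℤ → Prop} {h : ℤ → ℤ} {i j k : ℤ}

theorem depth_self (N : ℤ → ℤ → Prop) (j : ℤ) : depth N j j = 0 := by
  simp [depth]

open Classical in
theorem depth_pos (hij : i < j) : 0 < depth N j i :=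
  Finset.card_pos.2 ⟨j, Finset.mem_filter.2 ⟨Finset.mem_Ioc.2 ⟨hij, le_rfl⟩, visible_self N j⟩⟩

open Classical in
theorem depth_anti (N : ℤ → ℤ → Prop) (j : ℤ) : Antitone (depth N j) := fun _ _ hik =>
  Finset.card_le_card (Finset.filter_subset_filter _ (Finset.Ioc_subset_Ioc_left hik))

open Classical in
theorem depth_lt_depth (hk : Visible N j k) (hik : i < k) : depth N j k < depth N j i := by
  refine Finset.card_lt_card (Finset.ssubset_iff_of_subset
    (Finset.filter_subset_filter _ (Finset.Ioc_subset_Ioc_left hik.le)) |>.2 ⟨k, ?_, ?_⟩)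
  · exact Finset.mem_filter.2 ⟨Finset.mem_Ioc.2 ⟨hik, hk.1⟩, hk⟩
  · simp

theorem eq_of_depth_eq (hi : Visible N j i) (hk : Visible N j k)
    (heq : depth N j i = depth N j k) : i = k :=
  le_antisymm (not_lt.1 fun hki => heq.not_lt (depth_lt_depth hi hki))
    (not_lt.1 fun hik => heq.not_gt (depth_lt_depth hk hik))

theorem IsArcSystem.depth_shift (hN : IsArcSystem n N) (i j : ℤ) :
    depth N (j + n) (i + n) = depth N j i := by
  refine Finset.card_nbij' (· - n) (· + n) ?_ ?_ ?_ ?_ <;> intro k hk <;>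
    simp only [Finset.coe_filter, Set.mem_ofPred_eq, Finset.mem_Ioc, sub_add_cancel,
      add_sub_cancel_right, hN.visible_shift, add_lt_add_iff_right, add_le_add_iff_right] at hk ⊢
  · exact ⟨by omega, (hN.visible_shift).1 (by simpa using hk.2)⟩
  · exact hk

theorem IsArcSystem.mem_leftDepths (hN : IsArcSystem n N) (hA : ∀ i j, A i j → N i j) {t : ℕ} :
    t ∈ leftDepths n N A j ↔ ∃ i, A i j ∧ depth N (j - 1) i = t := by
  simp only [leftDepths, Finset.mem_image, Finset.mem_filter, Finset.mem_Ico]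
  refine exists_congr fun i => and_congr_left' (and_iff_right_of_imp fun hij => ?_)
  have := hN.lt (hA i j hij)
  have := hN.sub_le (hA i j hij)
  omega

theorem IsArcSystem.leftDepths_periodic (hN : IsArcSystem n N) (hA : ∀ i j, A i j → N i j)
    (hshift : ∀ i j, A (i + n) (j + n) ↔ A i j) : Function.Periodic (leftDepths n N A) n := by
  intro j
  ext t
  rw [hN.mem_leftDepths hA, hN.mem_leftDepths hA, ← (Equiv.addRight n).exists_congr_right]
  simp only [Equiv.coe_addRight, hshift, add_sub_right_comm, hN.depth_shift]

theorem IsArcSystem.zero_mem_leftDepths (hN : IsArcSystem n N) (j : ℤ) :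
    0 ∈ leftDepths n N N j :=
  (hN.mem_leftDepths fun _ _ => id).2 ⟨j - 1, by simpa using hN.edge (j - 1), depth_self N _⟩

theorem IsCliqueDissection.add_two_le_depth (hN : IsCliqueDissection n N C) (hC : C i j)
    (hkj : N k j) (hik : i < k) : depth N (j - 1) k + 2 ≤ depth N (j - 1) i := by
  have hij := hN.arc_of_clique hC
  obtain ⟨p, q, hip, hpq, hqj, hp, hq⟩ := hN.exists_inner_vertices hC
  have hqk : q ≤ k := not_lt.1 fun hkq =>
    hik.ne' (hq.2.2 k j hkj hik.le le_rfl hkq hqj).1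
  have hpi := depth_lt_depth (hN.visible_of_isCellVertex hij hp (hpq.trans hqj)) hip
  have hqp := depth_lt_depth (hN.visible_of_isCellVertex hij hq hqj) hpq
  have := depth_anti N (j - 1) hqk
  omega

theorem IsArcSystem.exists_leftmost (hN : IsArcSystem n N) (j : ℤ) :
    ∃ a, N a j ∧ ∀ k, N k j → a ≤ k :=
  Int.exists_least_of_bdd ⟨j - n, fun _ hk => sub_le_comm.1 (hN.sub_le hk)⟩
    ⟨j - 1, by simpa using hN.edge (j - 1)⟩

theorem visible_iff_of_leftmost {a : ℤ} (ha : N a j)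
    (hmin : ∀ k, N k j → a ≤ k) (hkj : k < j) : Visible N j k ↔ k ≤ a ∧ Visible N (j - 1) k := by
  constructor
  · intro hk
    exact ⟨not_lt.1 fun hak => lt_irrefl j (hk.2 a j ha hak hkj),
      hk.mono (by omega) (by omega)⟩
  · rintro ⟨hka, hk⟩
    refine ⟨hkj.le, fun c b hcb hck hkb => ?_⟩
    have hjb := hk.2 c b hcb hck hkb
    have : b ≠ j := by
      rintro rfl
      have := hmin c hcb
      omega
    omega

/-- At `j` the visible positions to the right of its leftmost neighbour `a` disappear, and `j`
itself appears. -/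
theorem IsArcSystem.depth_add_depth (hN : IsArcSystem n N) {a : ℤ} (ha : N a j)
    (hmin : ∀ k, N k j → a ≤ k) (hia : i ≤ a) :
    depth N j i + depth N (j - 1) a = depth N (j - 1) i + 1 := by
  classical
  have haj := hN.lt ha
  have hj : {k ∈ Finset.Ioc i j | Visible N j k} =
      insert j {k ∈ Finset.Ioc i a | Visible N (j - 1) k} := by
    ext k
    have := visible_iff_of_leftmost (k := k) ha hmin
    have := visible_self N j
    grind
  have hj' : {k ∈ Finset.Ioc i (j - 1) | Visible N (j - 1) k} =
      {k ∈ Finset.Ioc i a | Visible N (j - 1) k} ∪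
        {k ∈ Finset.Ioc a (j - 1) | Visible N (j - 1) k} := by
    rw [← Finset.filter_union, Finset.Ioc_union_Ioc_eq_Ioc hia (by omega)]
  have hdisj : Disjoint {k ∈ Finset.Ioc i a | Visible N (j - 1) k}
      {k ∈ Finset.Ioc a (j - 1) | Visible N (j - 1) k} :=
    Finset.disjoint_filter_filter (Finset.Ioc_disjoint_Ioc_of_le le_rfl)
  simp only [depth]
  rw [hj, hj', Finset.card_union_of_disjoint hdisj, Finset.card_insert_of_notMem (by grind)]
  omega

theorem IsArcSystem.sup_leftDepths (hN : IsArcSystem n N) {a : ℤ} (ha : N a j)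
    (hmin : ∀ k, N k j → a ≤ k) : (leftDepths n N N j).sup id = depth N (j - 1) a := by
  refine le_antisymm (Finset.sup_le fun t ht => ?_)
    (Finset.le_sup (f := id) ((hN.mem_leftDepths fun _ _ => id).2 ⟨a, ha, rfl⟩))
  obtain ⟨k, hk, rfl⟩ := (hN.mem_leftDepths fun _ _ => id).1 ht
  exact depth_anti N _ (hmin k hk)

theorem IsArcSystem.sub_eq_depth (hN : IsArcSystem n N)
    (hstep : ∀ j, h j = h (j - 1) + 1 - ((leftDepths n N N j).sup id : ℕ)) (hi : Visible N j i) :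
    h j - h i = depth N j i := by
  obtain ⟨hij, hi⟩ := hi
  induction j, hij using Int.leInduction with
  | base => simp [depth_self]
  | succ j hij ih =>
    obtain ⟨a, ha, hmin⟩ := hN.exists_leftmost (j + 1)
    obtain ⟨hia, hij'⟩ := (visible_iff_of_leftmost ha hmin (Int.lt_add_one_iff.2 hij)).1
      ⟨by omega, hi⟩
    have hdepth := hN.depth_add_depth ha hmin hia
    have hsup := hN.sup_leftDepths ha hmin
    have hheight := hstep (j + 1)
    rw [add_sub_cancel_right] at hdepth hsup hheight hij'
    have := ih hij'.2
    omega

theorem isSuffixMin_iff_visible (hle : ∀ a b, N a b → h b ≤ h a + 1)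
    (harc : ∀ a b, N a b → IsSuffixMin h (b - 1) a) (hvis : Visible N j i → IsSuffixMin h j i) :
    IsSuffixMin h j i ↔ Visible N j i := by
  refine ⟨fun hi => ⟨hi.1, fun a b hab hai hib => not_le.1 fun hbj => ?_⟩, hvis⟩
  have hhi := (harc a b hab).2 i hai (by omega)
  have hhb := hi.2 b hib hbj
  have := hle a b hab
  omega

theorem IsDissection.isSuffixMin_iff_visible (hN : IsDissection n N)
    (hstep : ∀ j, h j = h (j - 1) + 1 - ((leftDepths n N N j).sup id : ℕ)) :
    IsSuffixMin h j i ↔ Visible N j i := by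
  have hvis : ∀ {i j}, Visible N j i → IsSuffixMin h j i := fun {i j} hi => by
    refine ⟨hi.1, fun m him hmj => ?_⟩
    have hsub := hN.sub_eq_depth hstep (hi.mono him.le hmj)
    have := depth_pos (N := N) him
    omega
  refine InfinityGon.isSuffixMin_iff_visible (fun a b hab => ?_)
    (fun a b hab => hvis (hN.visible_of_arc hab)) hvis
  have hsub := hN.sub_eq_depth hstep (hN.visible_of_arc hab)
  have hsup : depth N (b - 1) a ≤ (leftDepths n N N b).sup id :=
    Finset.le_sup (f := id) ((hN.mem_leftDepths fun _ _ => id).2 ⟨a, hab, rfl⟩)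
  have := hstep b
  omega

theorem IsDissection.arcsOfDepths_leftDepths (hN : IsDissection n N)
    (hstep : ∀ j, h j = h (j - 1) + 1 - ((leftDepths n N N j).sup id : ℕ))
    (hA : ∀ i j, A i j → N i j) : arcsOfDepths h (leftDepths n N A) = A := by
  ext i j
  unfold arcsOfDepths
  rw [hN.isSuffixMin_iff_visible hstep]
  constructor
  · rintro ⟨hi, t, ht, hsub⟩
    obtain ⟨k, hk, rfl⟩ := (hN.mem_leftDepths hA).1 ht
    rw [hN.sub_eq_depth hstep hi] at hsub
    rwa [eq_of_depth_eq hi (hN.visible_of_arc (hA k j hk)) (by exact_mod_cast hsub)]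
  · intro hij
    have hi := hN.visible_of_arc (hA i j hij)
    exact ⟨hi, _, (hN.mem_leftDepths hA).2 ⟨i, hij, rfl⟩, hN.sub_eq_depth hstep hi⟩

theorem leftDepths_arcsOfDepths {T S : ℤ → Finset ℕ} (hN : IsArcSystem n (arcsOfDepths h T))
    (hvis : ∀ i j, IsSuffixMin h j i ↔ Visible (arcsOfDepths h T) j i)
    (hlevel : ∀ j, ∀ c ≤ h j, ∃ i, IsSuffixMin h j i ∧ h i = c)
    (hstep : ∀ m, h m ≤ h (m - 1) + 1) (hST : ∀ j, S j ⊆ T j) :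
    leftDepths n (arcsOfDepths h T) (arcsOfDepths h S) = S := by
  ext j t
  have hA : ∀ i j, arcsOfDepths h S i j → arcsOfDepths h T i j :=
    fun i j ⟨hi, t, ht, hsub⟩ => ⟨hi, t, hST j ht, hsub⟩
  have hdepth : ∀ {i}, IsSuffixMin h (j - 1) i →
      (depth (arcsOfDepths h T) (j - 1) i : ℤ) = h (j - 1) - h i := fun hi => by
    rw [← hi.card_between hstep, depth]
    congr!
    ext j i
    exact (hvis i j).symm
  rw [hN.mem_leftDepths hA]
  constructor
  · rintro ⟨i, ⟨hi, t', ht', hsub⟩, rfl⟩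
    rw [← hdepth hi, Nat.cast_inj] at hsub
    rwa [hsub]
  · intro ht
    obtain ⟨i, hi, hhi⟩ := hlevel (j - 1) (h (j - 1) - t) (by omega)
    have hsub : h (j - 1) - h i = t := by omega
    refine ⟨i, ⟨hi, t, ht, hsub⟩, ?_⟩
    rw [← hdepth hi] at hsub
    exact_mod_cast hsub

end Depth

section Words

/-- The larger element of `x` is the set of depths of the left neighbours of a vertex in a
dissection, and the smaller one the set of depths of its left neighbours below a clique. The depth
`0` stands for the edge from the preceding vertex; an arc is above a cell with at least four
vertices exactly if its depth is positive and does not succeed the depth of another arc. -/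
def IsLetter (x : Finset ℕ × Finset ℕ) : Prop :=
  0 ∈ x.1 ∧ x.2 ⊆ x.1 ∧ ∀ t ∈ x.2, 0 < t ∧ t - 1 ∉ x.1

/-- The number of visible vertices that disappear behind the longest arc of a letter. -/
def weight (x : Finset ℕ × Finset ℕ) : ℕ := x.1.sup id

variable {n : ℕ}

/-- The number of visible vertices at `j`, up to a constant. -/
noncomputable def height (w : ZMod n → Finset ℕ × Finset ℕ) (j : ℤ) : ℤ :=
  ∑ k ∈ Finset.Ioc 0 j, (1 - weight (w k) : ℤ) - ∑ k ∈ Finset.Ioc j 0, (1 - weight (w k) : ℤ)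

variable {w : ZMod n → Finset ℕ × Finset ℕ} {N C : ℤ → ℤ → Prop} {i j : ℤ}

theorem height_eq (w : ZMod n → Finset ℕ × Finset ℕ) (j : ℤ) :
    height w j = height w (j - 1) + 1 - weight (w j) := by
  unfold height
  rcases lt_or_ge 0 j with hj | hj
  · rw [← Finset.insert_Ioc_sub_one_right_eq_Ioc hj, Finset.sum_insert (by simp),
      Finset.Ioc_eq_empty_of_le hj.le, Finset.Ioc_eq_empty_of_le (Int.le_sub_one_of_lt hj)]
    ring
  · rw [← Finset.insert_Ioc_left_eq_Ioc_sub_one hj, Finset.sum_insert (by simp),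
      Finset.Ioc_eq_empty_of_le hj, Finset.Ioc_eq_empty_of_le ((sub_one_lt j).le.trans hj)]
    ring

theorem height_le (w : ZMod n → Finset ℕ × Finset ℕ) (j : ℤ) :
    height w j ≤ height w (j - 1) + 1 := by
  rw [height_eq]
  omega

theorem height_add_natCast (w : ZMod n → Finset ℕ × Finset ℕ) (j : ℤ) (m : ℕ) :
    height w (j + m) =
      height w j + ∑ k ∈ Finset.range m, (1 - weight (w ((j + 1 : ℤ) + k)) : ℤ) := by
  induction m with
  | zero => simp
  | succ m ih =>
    have hm : j + (m + 1 : ℕ) - 1 = j + m := by push_cast; ring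
    rw [height_eq, hm, ih, Finset.sum_range_succ]
    push_cast
    ring_nf

/-- The arcs of the dissection encoded by `w`. -/
def wordArcs (w : ZMod n → Finset ℕ × Finset ℕ) : ℤ → ℤ → Prop :=
  arcsOfDepths (height w) fun j => (w j).1

/-- The cliques of the dissection encoded by `w`. -/
def wordCliques (w : ZMod n → Finset ℕ × Finset ℕ) : ℤ → ℤ → Prop :=
  arcsOfDepths (height w) fun j => (w j).2

theorem height_le_of_wordArcs (hij : wordArcs w i j) : height w j ≤ height w i + 1 := by
  obtain ⟨-, t, ht, hsub⟩ := hij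
  have hle : t ≤ weight (w j) := Finset.le_sup (f := id) ht
  have := height_eq w j
  omega

/-- The letters of a dissection with cliques. -/
noncomputable def toWord (n : ℕ) (N C : ℤ → ℤ → Prop) (x : ZMod n) : Finset ℕ × Finset ℕ :=
  (leftDepths n N N x.val, leftDepths n N C x.val)

theorem IsCliqueDissection.isLetter_toWord (hN : IsCliqueDissection n N C) (x : ZMod n) :
    IsLetter (toWord n N C x) := by
  refine ⟨hN.zero_mem_leftDepths _, fun t ht => ?_, fun t ht => ?_⟩ <;>
    obtain ⟨i, hC, rfl⟩ := (hN.mem_leftDepths fun _ _ => hN.arc_of_clique).1 ht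
  · exact (hN.mem_leftDepths fun _ _ => id).2 ⟨i, hN.arc_of_clique hC, rfl⟩
  obtain ⟨p, q, hip, hpq, hqj, -⟩ := hN.exists_inner_vertices hC
  refine ⟨depth_pos (by omega), fun hpred => ?_⟩
  obtain ⟨k, hk, hdepth⟩ := (hN.mem_leftDepths fun _ _ => id).1 hpred
  have hpos : 0 < depth N (x.val - 1) i := depth_pos (by omega)
  have hik : i < k := not_le.1 fun hki => by
    have := depth_anti N (x.val - 1) hki
    omega
  have := hN.add_two_le_depth hC hk hik
  omega

variable [NeZero n]

theorem height_add_period (w : ZMod n → Finset ℕ × Finset ℕ) (j : ℤ) :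
    height w (j + n) = height w j + (n - ∑ x, (weight (w x) : ℤ)) := by
  have hsum : ∑ x, (1 - (weight (w (((j + 1 : ℤ) : ZMod n) + x)) : ℤ)) =
      ∑ x, (1 - (weight (w x) : ℤ)) :=
    Equiv.sum_comp (Equiv.addLeft ((j + 1 : ℤ) : ZMod n)) fun x => 1 - (weight (w x) : ℤ)
  rw [height_add_natCast,
    sum_range_natCast_zmod fun x => 1 - (weight (w (((j + 1 : ℤ) : ZMod n) + x)) : ℤ), hsum]
  simp

/-- A sequence of letters, indexed by the vertices modulo `n`. As at least one vertex per period
has to remain visible, the weights sum up to less than `n`. -/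
structure IsWord (w : ZMod n → Finset ℕ × Finset ℕ) : Prop where
  isLetter : ∀ x, IsLetter (w x)
  sum_lt : ∑ x, weight (w x) < n

theorem arcsOfDepths_shift (w : ZMod n → Finset ℕ × Finset ℕ) (S : ZMod n → Finset ℕ) (i j : ℤ) :
    arcsOfDepths (height w) (fun j => S j) (i + n) (j + n) ↔
      arcsOfDepths (height w) (fun j => S j) i j := by
  have hmin : IsSuffixMin (height w) (j + n - 1) (i + n) ↔ IsSuffixMin (height w) (j - 1) i := by
    unfold IsSuffixMin
    rw [← (Equiv.addRight (n : ℤ)).forall_congr_right]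
    simp only [Equiv.coe_addRight, add_sub_right_comm, add_le_add_iff_right, add_lt_add_iff_right,
      height_add_period]
  unfold arcsOfDepths
  rw [hmin, add_sub_right_comm, height_add_period, height_add_period, add_sub_add_right_eq_sub]
  simp

theorem IsWord.isDissection (hw : IsWord w) : IsDissection n (wordArcs w) := by
  have hlt : ∀ {i j}, wordArcs w i j → i < j := fun hij => Int.lt_of_le_sub_one hij.1.1
  have hnc : ∀ {i j r s}, wordArcs w i j → wordArcs w r s → ¬ (i < r ∧ r < j ∧ j < s) := by
    rintro i j r s hij hrs ⟨hir, hrj, hjs⟩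
    have := hij.1.2 r hir (by omega)
    have := hrs.1.2 j hrj (by omega)
    have := height_le_of_wordArcs hij
    omega
  have hshift := arcsOfDepths_shift w fun x => (w x).1
  refine ⟨⟨hlt, fun {i j} hij => ?_, fun i => ?_, hshift⟩, hnc⟩
  · have hn := NeZero.pos n
    have := hnc hij ((hshift i j).2 hij)
    omega
  · refine ⟨?_, 0, (hw.isLetter _).1, ?_⟩ <;> rw [add_sub_cancel_right]
    · exact isSuffixMin_self _ _
    · simp

theorem IsWord.exists_isSuffixMin_eq (hw : IsWord w) (j : ℤ) {c : ℤ} (hc : c ≤ height w j) :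
    ∃ i, IsSuffixMin (height w) j i ∧ height w i = c := by
  have hlt : ∑ x, (weight (w x) : ℤ) < n := by exact_mod_cast hw.sum_lt
  have hback : ∀ m : ℕ, height w (j - m * n) ≤ height w j - m := fun m => by
    induction m with
    | zero => simp
    | succ m ih =>
      have := height_add_period w (j - (m + 1) * n)
      rw [show j - (m + 1) * n + (n : ℤ) = j - m * n by ring] at this
      push_cast
      omega
  have hback' := hback (height w j - c).toNat
  exact InfinityGon.exists_isSuffixMin_eq (height_le w)
    (sub_le_self j (by positivity)) (hback'.trans (by omega)) hc

theorem IsWord.isSuffixMin_of_visible (hw : IsWord w) (hi : Visible (wordArcs w) j i) :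
    IsSuffixMin (height w) j i := by
  by_contra hmin
  obtain ⟨m, ⟨him, hmj, hmi⟩, hleast⟩ := Int.exists_least_of_bdd
    (P := fun m => i < m ∧ m ≤ j ∧ height w m ≤ height w i) ⟨i, fun m hm => hm.1.le⟩
    (by simpa [IsSuffixMin, hi.1] using hmin)
  have habove : ∀ k, i < k → k < m → height w i < height w k := fun k hik hkm =>
    not_le.1 fun hki => hkm.not_ge (hleast k ⟨hik, by omega, hki⟩)
  obtain ⟨a, ha, hha⟩ := hw.exists_isSuffixMin_eq (m - 1) (c := height w (m - 1) - weight (w m))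
    (by omega)
  have ham : wordArcs w a m := by
    obtain ⟨t, ht, hsup⟩ := Finset.exists_mem_eq_sup (w m).1 ⟨0, (hw.isLetter m).1⟩ id
    exact ⟨ha, t, ht, by simp only [weight, hsup, id_eq] at hha; omega⟩
  have hheight := height_eq w m
  have := ha.1
  rcases lt_trichotomy a i with hai | rfl | hia
  · exact hmj.not_gt (hi.2 a m ham hai him)
  · omega
  · have := habove a hia (by omega)
    omega

theorem IsWord.isSuffixMin_iff_visible (hw : IsWord w) :
    IsSuffixMin (height w) j i ↔ Visible (wordArcs w) j i :=
  InfinityGon.isSuffixMin_iff_visible (fun _ _ => height_le_of_wordArcs) (fun _ _ hab => hab.1)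
    hw.isSuffixMin_of_visible

theorem IsWord.exists_inner_vertices (hw : IsWord w) (hij : wordCliques w i j) :
    ∃ p q, i < p ∧ p < q ∧ q < j ∧ IsCellVertex (wordArcs w) i j p ∧
      IsCellVertex (wordArcs w) i j q := by
  obtain ⟨hi, t, ht, hsub⟩ := hij
  obtain ⟨hzero, hsubset, hclique⟩ := hw.isLetter j
  obtain ⟨htpos, hpred⟩ := hclique t ht
  have htwo : t ≠ 1 := by
    rintro rfl
    exact hpred hzero
  have hcell : ∀ k, IsSuffixMin (height w) (j - 1) k → height w i < height w k →
      height w k ≤ height w i + 2 → IsCellVertex (wordArcs w) i j k := fun k hk hik hki => by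
    refine ⟨((hi.lt_iff_lt hk).1 hik).le, by have := hk.1; omega, fun a b hab hia hbj hak hkb => ?_⟩
    have hjb := (hw.isSuffixMin_iff_visible.1 hk).2 a b hab hak hkb
    obtain rfl : b = j := by omega
    obtain ⟨ha, s, hs, hsub'⟩ := hab
    have hne : s ≠ t - 1 := fun h => hpred (h ▸ hs)
    have hlt := (ha.lt_iff_lt hk).2 hak
    have hle : height w i ≤ height w a := hia.eq_or_lt.elim (fun h => h ▸ le_rfl) fun h =>
      ((hi.lt_iff_lt ha).2 h).le
    exact ⟨ha.eq_of_eq hi (by omega), rfl⟩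
  obtain ⟨p, hp, hhp⟩ := hw.exists_isSuffixMin_eq (j - 1) (c := height w i + 1) (by omega)
  obtain ⟨q, hq, hhq⟩ := hw.exists_isSuffixMin_eq (j - 1) (c := height w i + 2) (by omega)
  exact ⟨p, q, (hi.lt_iff_lt hp).1 (by omega), (hp.lt_iff_lt hq).1 (by omega),
    Int.lt_of_le_sub_one hq.1, hcell p hp (by omega) (by omega), hcell q hq (by omega) (by omega)⟩

theorem IsWord.isCliqueDissection (hw : IsWord w) :
    IsCliqueDissection n (wordArcs w) (wordCliques w) where
  toIsDissection := hw.isDissection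
  arc_of_clique := fun ⟨hi, t, ht, hsub⟩ => ⟨hi, t, (hw.isLetter _).2.1 ht, hsub⟩
  clique_shift := arcsOfDepths_shift w fun x => (w x).2
  exists_inner_vertices := hw.exists_inner_vertices

theorem IsWord.toWord_eq (hw : IsWord w) : toWord n (wordArcs w) (wordCliques w) = w := by
  have hleft : ∀ S : ZMod n → Finset ℕ, (∀ x, S x ⊆ (w x).1) → ∀ x : ZMod n,
      leftDepths n (wordArcs w) (arcsOfDepths (height w) fun j => S j) x.val = S x := by
    intro S hS x
    have h := leftDepths_arcsOfDepths hw.isDissection.toIsArcSystem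
      (fun i j => hw.isSuffixMin_iff_visible) (fun j c hc => hw.exists_isSuffixMin_eq j hc)
      (height_le w) (S := fun j => S j) fun j => hS j
    simpa [wordArcs] using congrFun h x.val
  funext x
  exact Prod.ext (hleft _ (fun _ => subset_rfl) x) (hleft _ (fun x => (hw.isLetter x).2.1) x)

theorem IsCliqueDissection.toWord_intCast (hN : IsCliqueDissection n N C) (j : ℤ) :
    toWord n N C (j : ZMod n) = (leftDepths n N N j, leftDepths n N C j) := by
  simp only [toWord, ZMod.val_intCast]
  rw [map_emod_of_periodic (hN.leftDepths_periodic (fun _ _ => id) hN.shift),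
    map_emod_of_periodic (hN.leftDepths_periodic (fun _ _ => hN.arc_of_clique) hN.clique_shift)]

theorem IsCliqueDissection.height_toWord (hN : IsCliqueDissection n N C) (j : ℤ) :
    height (toWord n N C) j =
      height (toWord n N C) (j - 1) + 1 - ((leftDepths n N N j).sup id : ℕ) := by
  rw [height_eq, hN.toWord_intCast]
  rfl

theorem IsCliqueDissection.wordArcs_toWord (hN : IsCliqueDissection n N C) :
    wordArcs (toWord n N C) = N := by
  simpa only [wordArcs, hN.toWord_intCast] using
    hN.arcsOfDepths_leftDepths hN.height_toWord fun _ _ => id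

theorem IsCliqueDissection.wordCliques_toWord (hN : IsCliqueDissection n N C) :
    wordCliques (toWord n N C) = C := by
  simpa only [wordCliques, hN.toWord_intCast] using
    hN.arcsOfDepths_leftDepths hN.height_toWord fun _ _ => hN.arc_of_clique

theorem IsCliqueDissection.isWord_toWord (hN : IsCliqueDissection n N C) :
    IsWord (toWord n N C) := by
  refine ⟨hN.isLetter_toWord, ?_⟩
  obtain ⟨v, hv⟩ := hN.exists_visible_period (Int.natCast_nonneg n)
  have hdepth := hN.sub_eq_depth hN.height_toWord hv
  have hpos : 0 < depth N (v + n) v := depth_pos (by have := NeZero.pos n; omega)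
  have hperiod := height_add_period (toWord n N C) v
  zify
  omega

end Words

section Letters

open Classical in
/-- The letters of weight at most `m`. -/
noncomputable def boundedLetters (m : ℕ) : Finset (Finset ℕ × Finset ℕ) :=
  ((Finset.range (m + 1)).powerset ×ˢ (Finset.range (m + 1)).powerset).filter IsLetter

/-- The letters of weight `m`. -/
noncomputable def lettersOfWeight (m : ℕ) : Finset (Finset ℕ × Finset ℕ) :=
  (boundedLetters m).filter (weight · = m)

variable {m : ℕ} {x : Finset ℕ × Finset ℕ}

theorem weight_le_iff : weight x ≤ m ↔ ∀ t ∈ x.1, t ≤ m :=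
  Finset.sup_le_iff

theorem mem_boundedLetters : x ∈ boundedLetters m ↔ IsLetter x ∧ weight x ≤ m := by
  simp only [boundedLetters, Finset.mem_filter, Finset.mem_product, Finset.mem_powerset,
    Finset.subset_iff, Finset.mem_range, Nat.lt_succ_iff, weight_le_iff]
  exact ⟨fun h => ⟨h.2, h.1.1⟩, fun h => ⟨⟨h.2, fun _ ht => h.2 (h.1.2.1 ht)⟩, h.1⟩⟩

theorem mem_lettersOfWeight : x ∈ lettersOfWeight m ↔ IsLetter x ∧ weight x = m := by
  rw [lettersOfWeight, Finset.mem_filter, mem_boundedLetters, and_assoc,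
    and_iff_right_of_imp (a := weight x ≤ m) Eq.le]

theorem mem_boundedLetters_iff_forall : x ∈ boundedLetters m ↔ IsLetter x ∧ ∀ t ∈ x.1, t ≤ m := by
  rw [mem_boundedLetters, weight_le_iff]

theorem mem_lettersOfWeight_succ :
    x ∈ lettersOfWeight (m + 1) ↔ IsLetter x ∧ m + 1 ∈ x.1 ∧ ∀ t ∈ x.1, t ≤ m + 1 := by
  rw [mem_lettersOfWeight, le_antisymm_iff, weight_le_iff, weight, Finset.le_sup_iff (by simp)]
  grind

theorem card_boundedLetters (m : ℕ) :
    (boundedLetters m).card = ∑ k ∈ Finset.range (m + 1), (lettersOfWeight k).card := by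
  rw [Finset.card_eq_sum_card_fiberwise (f := weight) (t := Finset.range (m + 1))
    fun x hx => by simpa [Nat.lt_succ_iff] using (mem_boundedLetters.1 hx).2]
  refine Finset.sum_congr rfl fun k hk => congrArg _ ?_
  ext x
  rw [Finset.mem_filter, mem_boundedLetters, mem_lettersOfWeight]
  grind

theorem card_lettersOfWeight_zero : (lettersOfWeight 0).card = 1 := by
  refine Finset.card_eq_one.2 ⟨({0}, ∅), Finset.ext fun ⟨T, S⟩ => ?_⟩
  rw [mem_lettersOfWeight, ← Nat.le_zero, weight_le_iff, Finset.mem_singleton, Prod.mk.injEq]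
  constructor
  · rintro ⟨⟨h0, hST, hS⟩, hT⟩
    exact ⟨by grind, by grind⟩
  · rintro ⟨rfl, rfl⟩
    simp [IsLetter]

theorem card_lettersOfWeight_succ_notMem (m : ℕ) :
    ((lettersOfWeight (m + 1)).filter (m + 1 ∉ ·.2)).card = (boundedLetters m).card := by
  refine Finset.card_nbij' (fun x => (x.1.erase (m + 1), x.2)) (fun x => (insert (m + 1) x.1, x.2))
    ?_ ?_ ?_ ?_ <;> intro x hx <;>
    simp only [Finset.coe_filter, Set.mem_ofPred_eq, mem_lettersOfWeight_succ, Finset.mem_coe,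
      mem_boundedLetters_iff_forall, IsLetter] at hx ⊢
  · grind
  · grind
  · exact Prod.ext (Finset.insert_erase (by grind)) rfl
  · exact Prod.ext (Finset.erase_insert (by grind)) rfl

theorem card_lettersOfWeight_add_two_mem (m : ℕ) :
    ((lettersOfWeight (m + 2)).filter (m + 2 ∈ ·.2)).card = (boundedLetters m).card := by
  refine Finset.card_nbij' (fun x => (x.1.erase (m + 2), x.2.erase (m + 2)))
    (fun x => (insert (m + 2) x.1, insert (m + 2) x.2)) ?_ ?_ ?_ ?_ <;> intro x hx <;>
    simp only [Finset.coe_filter, Set.mem_ofPred_eq, mem_lettersOfWeight_succ, Finset.mem_coe,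
      mem_boundedLetters_iff_forall, IsLetter] at hx ⊢
  · grind
  · grind
  · exact Prod.ext (Finset.insert_erase (by grind)) (Finset.insert_erase (by grind))
  · exact Prod.ext (Finset.erase_insert (by grind)) (Finset.erase_insert (by grind))

theorem card_lettersOfWeight_one : (lettersOfWeight 1).card = (boundedLetters 0).card := by
  rw [← card_lettersOfWeight_succ_notMem, Finset.filter_true_of_mem]
  intro x hx h1
  have hx := (mem_lettersOfWeight.1 hx).1
  exact (hx.2.2 1 h1).2 hx.1

theorem card_lettersOfWeight_add_two (m : ℕ) :
    (lettersOfWeight (m + 2)).card = (boundedLetters (m + 1)).card + (boundedLetters m).card := by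
  rw [← card_lettersOfWeight_succ_notMem, ← card_lettersOfWeight_add_two_mem,
    add_comm (Finset.card _), Finset.card_filter_add_card_filter_not]

end Letters

section GeneratingFunction

open PowerSeries

/-- The generating function of the letters by weight. -/
noncomputable def letterSeries : ℤ⟦X⟧ := mk fun m => ((lettersOfWeight m).card : ℤ)

theorem letterSeries_mul_mk_one :
    letterSeries * mk 1 = mk fun m => ((boundedLetters m).card : ℤ) := by
  ext m
  simp [coeff_mul_mk_one, letterSeries, card_boundedLetters]

theorem letterSeries_eq : letterSeries = 1 + (X + X ^ 2) * (letterSeries * mk 1) := by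
  rw [letterSeries_mul_mk_one, add_mul]
  ext m
  rcases m with _ | _ | m
  · simp [letterSeries, card_lettersOfWeight_zero]
  · simp [letterSeries, coeff_X_pow_mul', coeff_one, coeff_succ_X_mul, card_lettersOfWeight_one]
  · simp [letterSeries, coeff_X_pow_mul', coeff_one, coeff_succ_X_mul,
      card_lettersOfWeight_add_two]

/-- The power series `B` for which `letterSeries = (1 - X)⁻¹ / (1 - B)`. -/
noncomputable def letterRatio : ℤ⟦X⟧ := 2 * X ^ 2 * mk 1 ^ 2

theorem letterSeries_mul_one_sub : letterSeries * (1 - letterRatio) = mk 1 := by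
  have hgeom : (mk 1 : ℤ⟦X⟧) * (1 - X) = 1 := mk_one_mul_one_sub_eq_one ℤ
  rw [letterRatio]
  linear_combination mk 1 * letterSeries_eq + letterSeries * (X * mk 1 - 1) * hgeom

theorem X_pow_dvd_letterSeries_pow_sub (d : ℕ) :
    X ^ (d + 1) ∣ letterSeries ^ (d + 1) - mk 1 ^ (d + 1) *
      ∑ l ∈ Finset.range (d / 2 + 1), ((d + l).choose l : ℤ⟦X⟧) * letterRatio ^ l := by
  have hX : X ^ (d + 1) ∣ letterRatio ^ (d / 2 + 1) := by
    refine (pow_dvd_pow X (show d + 1 ≤ 2 * (d / 2 + 1) by omega)).trans ?_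
    rw [pow_mul]
    exact pow_dvd_pow_of_dvd ((Dvd.intro_left _ rfl).mul_right _) _
  have htrunc := hX.trans (pow_dvd_one_sub_pow_mul_sum_choose_sub_one letterRatio d _)
  rw [← letterSeries_mul_one_sub, mul_pow, mul_assoc, dvd_sub_comm]
  convert htrunc.mul_left (letterSeries ^ (d + 1)) using 1
  rw [mul_sub, mul_one]

theorem coeff_mk_one_pow_mul_letterRatio_pow {d l : ℕ} (hl : 2 * l ≤ d) :
    coeff d (mk 1 ^ (d + 2) * letterRatio ^ l) =
      2 ^ l * ((2 * d + 1).choose (d - 2 * l) : ℤ) := by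
  have hX : mk 1 ^ (d + 2) * letterRatio ^ l =
      C (2 ^ l) * (X ^ (2 * l) * mk 1 ^ (d + 2 * l + 1 + 1)) := by
    rw [letterRatio, map_pow, map_ofNat, mul_pow, mul_pow, pow_mul]
    ring
  rw [hX, coeff_C_mul, coeff_X_pow_mul', if_pos hl, mk_one_pow_eq_mk_choose_add, coeff_mk,
    Nat.choose_symm_add]
  congr 3
  omega

theorem sum_coeff_letterSeries_pow (n : ℕ) [NeZero n] :
    ∑ k ∈ Finset.range n, coeff k (letterSeries ^ n) = torsionHalfCount n := by
  obtain ⟨d, rfl⟩ := Nat.exists_eq_add_one_of_ne_zero (NeZero.ne n)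
  have hcoeff := X_pow_dvd_iff.1 ((X_pow_dvd_letterSeries_pow_sub d).mul_right (mk 1)) d
    d.lt_succ_self
  rw [sub_mul, map_sub, sub_eq_zero] at hcoeff
  rw [← coeff_mul_mk_one, hcoeff, mul_right_comm, ← pow_succ, Finset.mul_sum, map_sum,
    torsionHalfCount]
  push_cast
  refine Finset.sum_congr rfl fun l hl => ?_
  have hl : 2 * l ≤ d := by
    have := Finset.mem_range.1 hl
    omega
  rw [mul_left_comm, ← nsmul_eq_mul, map_nsmul, coeff_mk_one_pow_mul_letterRatio_pow hl,
    nsmul_eq_mul]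
  simp only [mul_add_one, Nat.add_succ_sub_one]
  ring

end GeneratingFunction

section WordCount

open Classical in
/-- The sequences of letters, indexed by `ι`, of total weight `k`. -/
noncomputable def wordsOfWeight (ι : Type*) [Fintype ι] (k : ℕ) :
    Finset (ι → Finset ℕ × Finset ℕ) :=
  (Finset.finsuppAntidiag Finset.univ k).biUnion fun l =>
    Fintype.piFinset fun x => lettersOfWeight (l x)

theorem mem_wordsOfWeight {ι : Type*} [Fintype ι] {k : ℕ} {w : ι → Finset ℕ × Finset ℕ} :
    w ∈ wordsOfWeight ι k ↔ (∀ x, IsLetter (w x)) ∧ ∑ x, weight (w x) = k := by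
  simp only [wordsOfWeight, Finset.mem_biUnion, Fintype.mem_piFinset, mem_lettersOfWeight,
    Finset.mem_finsuppAntidiag]
  constructor
  · rintro ⟨l, ⟨hsum, -⟩, hl⟩
    exact ⟨fun x => (hl x).1, by simp_rw [(hl _).2, hsum]⟩
  · rintro ⟨hw, hsum⟩
    exact ⟨Finsupp.equivFunOnFinite.symm fun x => weight (w x), ⟨hsum, Finset.subset_univ _⟩,
      fun x => ⟨hw x, rfl⟩⟩

theorem card_wordsOfWeight (ι : Type*) [Fintype ι] (k : ℕ) :
    ((wordsOfWeight ι k).card : ℤ) = PowerSeries.coeff k (letterSeries ^ Fintype.card ι) := by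
  classical
  rw [← Finset.card_univ, ← Finset.prod_const, PowerSeries.coeff_prod, wordsOfWeight,
    Finset.card_biUnion]
  · simp [letterSeries, Fintype.card_piFinset]
  · intro l _ l' _ hne
    refine Finset.disjoint_left.2 fun w hw hw' => hne (Finsupp.ext fun x => ?_)
    rw [← (mem_lettersOfWeight.1 (Fintype.mem_piFinset.1 hw x)).2,
      (mem_lettersOfWeight.1 (Fintype.mem_piFinset.1 hw' x)).2]

variable {n : ℕ} [NeZero n]

open Classical in
theorem setOf_isWord_eq_biUnion :
    {w : ZMod n → Finset ℕ × Finset ℕ | IsWord w} =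
      (Finset.range n).biUnion (wordsOfWeight (ZMod n)) := by
  ext w
  simp only [Set.mem_ofPred_eq, Finset.mem_coe, Finset.mem_biUnion, Finset.mem_range,
    mem_wordsOfWeight]
  exact ⟨fun hw => ⟨_, hw.sum_lt, hw.isLetter, rfl⟩, fun ⟨_, hk, hw, hsum⟩ => ⟨hw, hsum ▸ hk⟩⟩

theorem finite_setOf_isWord : {w : ZMod n → Finset ℕ × Finset ℕ | IsWord w}.Finite := by
  rw [setOf_isWord_eq_biUnion]
  exact Finset.finite_toSet _

theorem ncard_setOf_isWord :
    {w : ZMod n → Finset ℕ × Finset ℕ | IsWord w}.ncard = torsionHalfCount n := by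
  rw [setOf_isWord_eq_biUnion, Set.ncard_coe_finset, Finset.card_biUnion]
  · zify
    simp only [card_wordsOfWeight, ZMod.card, sum_coeff_letterSeries_pow]
  · intro k _ l _ hkl
    exact Finset.disjoint_left.2 fun w hw hw' =>
      hkl ((mem_wordsOfWeight.1 hw).2.symm.trans (mem_wordsOfWeight.1 hw').2)

end WordCount

section Diagrams

/-- The collection of arcs of the ∞-gon that belong to an arc system, dropping the edges. -/
def arcSet (E : ℤ → ℤ → Prop) : Set (ℤ × ℤ) := {a | IsArc a ∧ E a.1 a.2}

/-- The arcs in `X` together with the edges `(i, i + 1)`. -/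
def withEdges (X : Set (ℤ × ℤ)) (i j : ℤ) : Prop := (i, j) ∈ X ∨ j = i + 1

variable {E : ℤ → ℤ → Prop} {X : Set (ℤ × ℤ)} {i j : ℤ} {n : ℕ}

theorem IsArcSystem.withEdges_arcSet {m : ℤ} (hE : IsArcSystem m E) :
    withEdges (arcSet E) = E := by
  ext i j
  refine ⟨?_, fun hij => ?_⟩
  · rintro (⟨-, hij⟩ | rfl)
    exacts [hij, hE.edge i]
  · have := hE.lt hij
    exact (eq_or_ne j (i + 1)).symm.imp_left fun hne => ⟨show 2 ≤ j - i by omega, hij⟩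

theorem arcSet_withEdges (hX : ∀ a ∈ X, IsArc a) : arcSet (withEdges X) = X := by
  ext ⟨i, j⟩
  refine ⟨?_, fun ha => ⟨hX _ ha, .inl ha⟩⟩
  rintro ⟨harc, ha | hj⟩
  · exact ha
  · simp only [IsArc] at harc hj
    omega

theorem withEdges_of_lt (hij : i < j) (h : 2 ≤ j - i → (i, j) ∈ X) : withEdges X i j :=
  (eq_or_ne j (i + 1)).symm.imp_left fun hne => h (by omega)

theorem IsPtolemySystem.arcSet_mem_goodDiagrams (hE : IsPtolemySystem n E) :
    arcSet E ∈ goodDiagrams n := by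
  refine ⟨fun a ha => ha.1, fun i j r ⟨harc, hij⟩ => ?_, fun i j r s hij hrs hir hrj hjs => ?_,
    fun a ha => hE.sub_le ha.2⟩
  · have hper : Function.Periodic (fun x => E (i + x) (j + x)) n := fun x => by
      simp only [← add_assoc, hE.shift]
    have hr : E (i + r * n) (j + r * n) = E i j := by simpa using hper.int_mul r 0
    exact ⟨by simpa [IsArc] using harc, hr ▸ hij⟩
  · obtain ⟨hir', his, hrj', hjs'⟩ := hE.ptolemy hij.2 hrs.2 hir hrj hjs
    exact ⟨(⟨·, hir'⟩), (⟨·, his⟩), (⟨·, hrj'⟩), (⟨·, hjs'⟩)⟩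

theorem isPtolemySystem_withEdges [NeZero n] (hX : X ∈ goodDiagrams n) :
    IsPtolemySystem n (withEdges X) := by
  obtain ⟨harc, hper, hpt, hlen⟩ := hX
  refine ⟨⟨?_, ?_, fun i => .inr rfl, fun i j => ?_⟩, ?_⟩
  · rintro i j (hij | rfl)
    · have : 2 ≤ j - i := harc _ hij
      omega
    · exact lt_add_one i
  · rintro i j (hij | rfl)
    · exact hlen _ hij
    · have := NeZero.pos n
      omega
  · refine or_congr ⟨fun h => ?_, fun h => ?_⟩ (by omega)
    · simpa using hper _ _ (-1) h
    · simpa using hper _ _ 1 h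
  · rintro i j r s (hij | hij) (hrs | hrs) hir hrj hjs
    · obtain ⟨hir', his, hrj', hjs'⟩ := hpt i j r s hij hrs hir hrj hjs
      exact ⟨withEdges_of_lt hir hir', withEdges_of_lt (by omega) his, withEdges_of_lt hrj hrj',
        withEdges_of_lt hjs hjs'⟩
    all_goals omega

theorem bijOn_arcSet (n : ℕ) [NeZero n] :
    Set.BijOn arcSet {E | IsPtolemySystem n E} (goodDiagrams n) :=
  Set.InvOn.bijOn (f' := withEdges)
    ⟨fun _ hE => hE.withEdges_arcSet, fun _ hX => arcSet_withEdges hX.1⟩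
    (fun _ hE => hE.arcSet_mem_goodDiagrams) (fun _ hX => isPtolemySystem_withEdges hX)

theorem bijOn_fillCliques (n : ℤ) :
    Set.BijOn (fun D : (ℤ → ℤ → Prop) × (ℤ → ℤ → Prop) => fillCliques D.1 D.2)
      {D | IsCliqueDissection n D.1 D.2} {E | IsPtolemySystem n E} :=
  Set.InvOn.bijOn (f' := fun E => (uncrossed E, cliqueTops E))
    ⟨fun _ hD => Prod.ext hD.uncrossed_fillCliques hD.cliqueTops_fillCliques,
      fun _ hE => hE.fillCliques_uncrossed⟩
    (fun _ hD => hD.isPtolemySystem_fillCliques) (fun _ hE => hE.isCliqueDissection)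

theorem bijOn_wordArcs_wordCliques (n : ℕ) [NeZero n] :
    Set.BijOn (fun w : ZMod n → Finset ℕ × Finset ℕ => (wordArcs w, wordCliques w))
      {w | IsWord w} {D | IsCliqueDissection n D.1 D.2} :=
  Set.InvOn.bijOn (f' := fun D => toWord n D.1 D.2)
    ⟨fun _ hw => hw.toWord_eq, fun _ hD => Prod.ext hD.wordArcs_toWord hD.wordCliques_toWord⟩
    (fun _ hw => hw.isCliqueDissection) (fun _ hD => hD.isWord_toWord)

theorem exists_bijOn_words_goodDiagrams (n : ℕ) [NeZero n] :
    ∃ f, Set.BijOn f {w : ZMod n → Finset ℕ × Finset ℕ | IsWord w} (goodDiagrams n) :=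
  ⟨_, (bijOn_arcSet n).comp <| (bijOn_fillCliques n).comp <| bijOn_wordArcs_wordCliques n⟩

end Diagrams

end InfinityGon

/-- The set of `n`-periodic Ptolemy diagrams with all arcs of length at most `n`
is finite, of cardinality `∑_{ℓ ≥ 0} 2^ℓ C(n−1+ℓ, ℓ) C(2n−1, n−1−2ℓ)`. -/
theorem count_goodDiagrams (n : ℕ) (hn : 1 ≤ n) :
    (goodDiagrams n).Finite ∧ (goodDiagrams n).ncard = torsionHalfCount n := by
  have : NeZero n := ⟨Nat.one_le_iff_ne_zero.1 hn⟩
  obtain ⟨f, hf⟩ := InfinityGon.exists_bijOn_words_goodDiagrams n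
  exact ⟨hf.finite_iff_finite.1 InfinityGon.finite_setOf_isWord,
    hf.ncard_eq.symm.trans InfinityGon.ncard_setOf_isWord⟩
end
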